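/- arXiv:1006.2560 — 5 statements merged into one kernel-verified Lean document; each statement's English description precedes it below -/
import Mathlib

section
/- Let α ⪰ ω be lattice paths from (0,0) to (n,r) and let Γ(α,ω) be the associated lattice path polymatroid. Then the toric ideal of Γ(α,ω) (the kernel of the toric map φ) is generated by the symmetric exchange binomials of Γ(α,ω). -/
/-- A lattice path from `(0,0)` to `(n,r)`, encoded by the set of positions of
its north steps among its `n + r` steps. -/
def IsLatticePath (n r : ℕ) (σ : Finset ℕ) : Prop :=
  σ ⊆ Finset.Icc 1 (n + r) ∧ σ.card = r

/-- `σ ⪰ τ`: each element of `N(σ)`, in increasing order, is at most the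
corresponding element of `N(τ)`. -/
def PathAbove (σ τ : Finset ℕ) : Prop :=
  ∀ k (h1 : k < (σ.sort (· ≤ ·)).length) (h2 : k < (τ.sort (· ≤ ·)).length),
    (σ.sort (· ≤ ·)).get ⟨k, h1⟩ ≤ (τ.sort (· ≤ ·)).get ⟨k, h2⟩

/-- The number of east steps of `σ` before position `a`. -/
def eastBefore (σ : Finset ℕ) (a : ℕ) : ℕ :=
  ((Finset.Icc 1 (a - 1)).filter (fun b => b ∉ σ)).card

/-- The monomial `m(σ)` of a lattice path: the exponent of `x_i` is the number
of north steps of `σ` along the line `x = i`. -/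
noncomputable def pathMonomial (σ : Finset ℕ) : ℕ →₀ ℕ :=
  ∑ a ∈ σ, Finsupp.single (eastBefore σ a) 1

/-- The bases of the lattice path polymatroid `Γ(α, ω)`: the monomials `m(σ)`
for lattice paths `σ` with `α ⪰ σ ⪰ ω`. -/
def IsLPBasis (n r : ℕ) (α ω : Finset ℕ) (m : ℕ →₀ ℕ) : Prop :=
  ∃ σ : Finset ℕ, IsLatticePath n r σ ∧ PathAbove α σ ∧ PathAbove σ ω ∧ m = pathMonomial σ

/-- `nn, nn'` are obtained from `m, m'` by a symmetric exchange, relative to a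
basis predicate `P`. -/
def SymExchP (P : (ℕ →₀ ℕ) → Prop) (m m' nn nn' : ℕ →₀ ℕ) : Prop :=
  P m ∧ P m' ∧ ∃ i j,
    m' i < m i ∧ m j < m' j ∧
    nn = m - Finsupp.single i 1 + Finsupp.single j 1 ∧
    nn' = m' + Finsupp.single i 1 - Finsupp.single j 1 ∧
    P nn ∧ P nn'

/-- The toric map of the collection of bases `P`: sends `Y_m` to the monomial `m`. -/
noncomputable def toricMapP (P : (ℕ →₀ ℕ) → Prop) :
    MvPolynomial {m : ℕ →₀ ℕ // P m} ℂ →ₐ[ℂ] MvPolynomial ℕ ℂ :=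
  MvPolynomial.aeval fun m => MvPolynomial.monomial m.1 1

/-- The set of symmetric exchange binomials. -/
def SEBP (P : (ℕ →₀ ℕ) → Prop) : Set (MvPolynomial {m : ℕ →₀ ℕ // P m} ℂ) :=
  { p | ∃ m m' nn nn' : {m : ℕ →₀ ℕ // P m},
      SymExchP P m.1 m'.1 nn.1 nn'.1 ∧
      p = MvPolynomial.X m * MvPolynomial.X m' - MvPolynomial.X nn * MvPolynomial.X nn' }

def cumS (m : ℕ →₀ ℕ) (i : ℕ) : ℕ := ∑ j ∈ Finset.range (i+1), m j

lemma cumS_mono (m : ℕ →₀ ℕ) : Monotone (cumS m) := by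
  intro a b h
  unfold cumS
  exact Finset.sum_le_sum_of_subset (Finset.range_mono (by omega))

lemma cumS_add (m m' : ℕ →₀ ℕ) (i : ℕ) : cumS (m + m') i = cumS m i + cumS m' i := by
  simp [cumS, Finset.sum_add_distrib]

lemma cumS_single (j i : ℕ) : cumS (Finsupp.single j 1) i = if j ≤ i then 1 else 0 := by
  simp [cumS, Finsupp.single_apply, Finset.sum_ite_eq]

lemma cumS_succ (m : ℕ →₀ ℕ) (i : ℕ) : cumS m (i+1) = cumS m i + m (i+1) := by
  simp [cumS, Finset.sum_range_succ]

lemma cumS_zero (m : ℕ →₀ ℕ) : cumS m 0 = m 0 := by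
  simp [cumS]

lemma cumS_inj {m m' : ℕ →₀ ℕ} (h : ∀ i, cumS m i = cumS m' i) : m = m' := by
  ext i
  cases i with
  | zero => simpa [cumS_zero] using h 0
  | succ k =>
    have h1 := h k
    have h2 := h (k+1)
    rw [cumS_succ, cumS_succ] at h2
    omega

def pathP (r : ℕ) (c : ℕ → ℕ) : Finset ℕ := (Finset.range r).image (fun k => c k + k + 1)

lemma pathP_sm {c : ℕ → ℕ} (hc : Monotone c) : StrictMono (fun k => c k + k + 1) := by
  intro a b h
  have := hc h.le
  simp only
  omega

lemma pathP_card {r : ℕ} {c : ℕ → ℕ} (hc : Monotone c) : (pathP r c).card = r := by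
  rw [pathP, Finset.card_image_of_injective _ (pathP_sm hc).injective, Finset.card_range]

lemma pathP_sort {r : ℕ} {c : ℕ → ℕ} (hc : Monotone c) :
    (pathP r c).sort (· ≤ ·) = (List.range r).map (fun k => c k + k + 1) := by
  have h1 : pathP r c = ((List.range r).map (fun k => c k + k + 1)).toFinset := by
    ext x; simp [pathP]
  rw [h1]
  refine (List.toFinset_sort _ ?_).2 ?_
  · exact List.Nodup.map (pathP_sm hc).injective List.nodup_range
  · rw [List.pairwise_map]
    exact List.pairwise_lt_range.imp (fun h => ((pathP_sm hc) h).le)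

lemma pathP_above {r : ℕ} {c c' : ℕ → ℕ} (hc : Monotone c) (hc' : Monotone c') :
    PathAbove (pathP r c) (pathP r c') ↔ ∀ k < r, c k ≤ c' k := by
  unfold PathAbove
  rw [pathP_sort hc, pathP_sort hc']
  simp

lemma pathP_east {r : ℕ} {c : ℕ → ℕ} (hc : Monotone c) {k : ℕ} (hk : k < r) :
    eastBefore (pathP r c) (c k + k + 1) = c k := by
  unfold eastBefore
  have h1 := Finset.card_filter_add_card_filter_not (s := Finset.Icc 1 (c k + k + 1 - 1)) (fun b => b ∈ pathP r c)
  have h2 : (Finset.Icc 1 (c k + k + 1 - 1)).filter (fun b => b ∈ pathP r c) = pathP k c := by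
    ext x
    simp only [Finset.mem_filter, Finset.mem_Icc, pathP, Finset.mem_image, Finset.mem_range]
    constructor
    · rintro ⟨⟨_, h⟩, l, hl, rfl⟩
      refine ⟨l, ?_, rfl⟩
      by_contra h'
      have := (pathP_sm hc).monotone (not_lt.1 h')
      omega
    · rintro ⟨l, hl, rfl⟩
      have := (pathP_sm hc) hl
      simp only at this
      exact ⟨⟨by omega, by omega⟩, l, by omega, rfl⟩
  rw [h2, pathP_card hc] at h1
  simp at h1 ⊢
  omega

lemma pathP_mon {r : ℕ} {c : ℕ → ℕ} (hc : Monotone c) :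
    pathMonomial (pathP r c) = ∑ k ∈ Finset.range r, Finsupp.single (c k) 1 := by
  unfold pathMonomial
  conv_lhs => rw [pathP]
  rw [Finset.sum_image ((pathP_sm hc).injective.injOn)]
  refine Finset.sum_congr rfl (fun k hk => ?_)
  have := pathP_east hc (Finset.mem_range.1 hk)
  unfold pathP at this
  rw [this]

lemma cumS_sum {ι : Type*} (s : Finset ι) (f : ι → ℕ →₀ ℕ) (i : ℕ) :
    cumS (∑ k ∈ s, f k) i = ∑ k ∈ s, cumS (f k) i := by
  classical
  induction s using Finset.induction_on with
  | empty => simp [cumS]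
  | insert a s ha ih => rw [Finset.sum_insert ha, Finset.sum_insert ha, cumS_add, ih]

lemma pathP_cum {r : ℕ} {c : ℕ → ℕ} (hc : Monotone c) (i : ℕ) :
    cumS (pathMonomial (pathP r c)) i = ((Finset.range r).filter (fun k => c k ≤ i)).card := by
  rw [pathP_mon hc, cumS_sum, Finset.card_filter]
  simp [cumS_single]

lemma pathP_cum_le {r : ℕ} {c : ℕ → ℕ} (hc : Monotone c) (i : ℕ) :
    cumS (pathMonomial (pathP r c)) i ≤ r := by
  rw [pathP_cum hc]
  exact (Finset.card_filter_le _ _).trans (by simp)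

lemma pathP_lt {r : ℕ} {c : ℕ → ℕ} (hc : Monotone c) {k i : ℕ} (hk : k < r) :
    k < cumS (pathMonomial (pathP r c)) i ↔ c k ≤ i := by
  rw [pathP_cum hc]
  constructor
  · intro h
    by_contra h'
    have : (Finset.range r).filter (fun k => c k ≤ i) ⊆ Finset.range k := by
      intro l
      simp only [Finset.mem_filter, Finset.mem_range]
      rintro ⟨_, h2⟩
      by_contra h3
      have := hc (not_lt.1 h3)
      omega
    have := Finset.card_le_card this
    simp at this
    omega
  · intro h
    have : Finset.range (k+1) ⊆ (Finset.range r).filter (fun k => c k ≤ i) := by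
      intro l
      simp only [Finset.mem_filter, Finset.mem_range]
      intro h2
      have := hc (Nat.lt_succ_iff.1 h2)
      omega
    have := Finset.card_le_card this
    simp at this
    omega

lemma pathP_cum_ge {n r : ℕ} {c : ℕ → ℕ} (hc : Monotone c) (hn : ∀ k, c k ≤ n) {i : ℕ} (hi : n ≤ i) :
    cumS (pathMonomial (pathP r c)) i = r := by
  rw [pathP_cum hc, Finset.filter_true_of_mem, Finset.card_range]
  intro k _
  exact (hn k).trans hi

lemma pathP_above' {r : ℕ} {c c' : ℕ → ℕ} (hc : Monotone c) (hc' : Monotone c') :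
    PathAbove (pathP r c) (pathP r c') ↔
      ∀ i, cumS (pathMonomial (pathP r c')) i ≤ cumS (pathMonomial (pathP r c)) i := by
  rw [pathP_above hc hc']
  constructor
  · intro h i
    by_contra h'
    have h1 := pathP_cum_le (r := r) hc' i
    have hk : cumS (pathMonomial (pathP r c)) i < r := by omega
    have h2 := (pathP_lt hc' hk (i := i)).1 (by omega)
    have h3 := (pathP_lt hc hk (i := i)).2 ((h _ hk).trans h2)
    omega
  · intro h k hk
    have h2 := (pathP_lt hc' hk (i := c' k)).2 le_rfl
    exact (pathP_lt hc hk).1 (h2.trans_le (h _))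

lemma path_exists {n r : ℕ} {σ : Finset ℕ} (h : IsLatticePath n r σ) :
    ∃ c : ℕ → ℕ, Monotone c ∧ (∀ k, c k ≤ n) ∧ σ = pathP r c := by
  obtain ⟨h1, h2⟩ := h
  let e := σ.orderEmbOfFin h2
  have he : ∀ k : Fin r, 1 ≤ e k ∧ e k ≤ n + r := fun k => by
    have := h1 (σ.orderEmbOfFin_mem h2 k)
    simpa using this
  let s : ℕ → ℕ := fun k => if h : k < r then e ⟨k, h⟩ else n + k + 1
  have hs : StrictMono s := by
    apply strictMono_nat_of_lt_succ
    intro k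
    simp only [s]
    by_cases hk : k + 1 < r
    · have hk' : k < r := by omega
      rw [dif_pos hk, dif_pos hk']
      apply e.strictMono
      simp
    · rw [dif_neg hk]
      split_ifs with hk'
      · have := (he ⟨k, hk'⟩).2
        omega
      · omega
  have hs0 : 1 ≤ s 0 := by
    simp only [s]
    split_ifs with h
    · exact (he _).1
    · omega
  have hs1 : ∀ k, k + 1 ≤ s k := fun k => by
    have := hs.add_le_nat k 0
    simp at this
    omega
  refine ⟨fun k => s k - (k+1), ?_, ?_, ?_⟩
  · apply monotone_nat_of_le_succ
    intro k
    have := hs (Nat.lt_succ_self k)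
    have := hs1 k
    simp only [Nat.succ_eq_add_one] at *
    omega
  · intro k
    by_cases hk : k < r
    · have := hs.add_le_nat (r - k) k
      rw [Nat.sub_add_cancel hk.le] at this
      have h3 : s r = n + r + 1 := by simp [s]
      simp only
      omega
    · simp only [s, dif_neg hk]
      omega
  · have h3 : (fun k => s k - (k + 1) + k + 1) = s := by
      funext k
      have := hs1 k
      omega
    rw [pathP, h3]
    have h4 : (σ : Set ℕ) = Set.range e := (Finset.range_orderEmbOfFin σ h2).symm
    ext x
    rw [← Finset.mem_coe, h4]
    simp only [Set.mem_range, Finset.mem_image, Finset.mem_range]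
    constructor
    · rintro ⟨k, rfl⟩
      exact ⟨k, k.2, by simp [s]⟩
    · rintro ⟨k, hk, rfl⟩
      exact ⟨⟨k, hk⟩, by simp [s, hk]⟩

lemma pathP_lattice {n r : ℕ} {c : ℕ → ℕ} (hc : Monotone c) (hn : ∀ k, c k ≤ n) :
    IsLatticePath n r (pathP r c) := by
  refine ⟨?_, pathP_card hc⟩
  intro x
  simp only [pathP, Finset.mem_image, Finset.mem_range, Finset.mem_Icc]
  rintro ⟨k, hk, rfl⟩
  have := hn k
  omega

lemma exists_path_of_cum {n r : ℕ} {m : ℕ →₀ ℕ} (h : ∀ i, n ≤ i → cumS m i = r) :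
    ∃ c : ℕ → ℕ, Monotone c ∧ (∀ k, c k ≤ n) ∧ m = pathMonomial (pathP r c) := by
  let c : ℕ → ℕ := fun k => ((Finset.range n).filter (fun i => cumS m i ≤ k)).card
  have hc : Monotone c := by
    intro a b hab
    apply Finset.card_le_card
    apply Finset.monotone_filter_right
    intro i _ hi
    exact le_trans hi hab
  have hn : ∀ k, c k ≤ n := fun k => (Finset.card_filter_le _ _).trans (by simp)
  have hle : ∀ i, cumS m i ≤ r := fun i => by
    rw [← h (max i n) (le_max_right _ _)]
    exact cumS_mono m (le_max_left _ _)
  have key : ∀ k i, k < r → (c k ≤ i ↔ k < cumS m i) := by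
    intro k i hk
    constructor
    · intro hci
      by_contra h'
      have hin : i < n := by
        by_contra h2
        have := h i (not_lt.1 h2)
        omega
      have : Finset.range (i+1) ⊆ (Finset.range n).filter (fun i => cumS m i ≤ k) := by
        intro l
        simp only [Finset.mem_filter, Finset.mem_range]
        intro hl
        have := cumS_mono m (Nat.lt_succ_iff.1 hl)
        omega
      have := Finset.card_le_card this
      simp only [Finset.card_range] at this
      change i + 1 ≤ c k at this
      omega
    · intro hki
      have : (Finset.range n).filter (fun i => cumS m i ≤ k) ⊆ Finset.range i := by
        intro l
        simp only [Finset.mem_filter, Finset.mem_range]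
        rintro ⟨_, hl⟩
        by_contra h'
        have := cumS_mono m (not_lt.1 h')
        omega
      have := Finset.card_le_card this
      simpa using this
  refine ⟨c, hc, hn, cumS_inj fun i => ?_⟩
  have h1 := hle i
  have h2 := pathP_cum_le (r := r) hc i
  rcases lt_trichotomy (cumS m i) (cumS (pathMonomial (pathP r c)) i) with h3 | h3 | h3
  · have hk : cumS m i < r := by omega
    have := (key _ i hk).1 ((pathP_lt hc hk).1 h3)
    omega
  · exact h3
  · have hk : cumS (pathMonomial (pathP r c)) i < r := by omega
    have := (pathP_lt hc hk (i := i)).2 ((key _ i hk).2 h3)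
    omega

lemma path_cum_ge {n r : ℕ} {σ : Finset ℕ} (h : IsLatticePath n r σ) {i : ℕ} (hi : n ≤ i) :
    cumS (pathMonomial σ) i = r := by
  obtain ⟨c, hc, hn, rfl⟩ := path_exists h
  exact pathP_cum_ge hc hn hi

lemma path_above {n r : ℕ} {σ τ : Finset ℕ} (h : IsLatticePath n r σ) (h' : IsLatticePath n r τ) :
    PathAbove σ τ ↔ ∀ i, cumS (pathMonomial τ) i ≤ cumS (pathMonomial σ) i := by
  obtain ⟨c, hc, hn, rfl⟩ := path_exists h
  obtain ⟨c', hc', hn', rfl⟩ := path_exists h'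
  exact pathP_above' hc hc'

lemma basis_iff {n r : ℕ} {α ω : Finset ℕ} (hα : IsLatticePath n r α) (hω : IsLatticePath n r ω)
    (m : ℕ →₀ ℕ) : IsLPBasis n r α ω m ↔
      ∀ i, cumS (pathMonomial ω) i ≤ cumS m i ∧ cumS m i ≤ cumS (pathMonomial α) i := by
  constructor
  · rintro ⟨σ, hσ, h1, h2, rfl⟩ i
    exact ⟨(path_above hσ hω).1 h2 i, (path_above hα hσ).1 h1 i⟩
  · intro h
    obtain ⟨c, hc, hn, rfl⟩ := exists_path_of_cum (n := n) (r := r) (m := m) (fun i hi => by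
      have := h i
      rw [path_cum_ge hα hi, path_cum_ge hω hi] at this
      omega)
    have hl := pathP_lattice (r := r) hc hn
    exact ⟨_, hl, (path_above hα hl).2 fun i => (h i).2, (path_above hl hω).2 fun i => (h i).1, rfl⟩

lemma core_exch {P : (ℕ →₀ ℕ) → Prop} {L U : ℕ → ℕ} {n : ℕ}
    (hP : ∀ m, P m ↔ ∀ i, L i ≤ cumS m i ∧ cumS m i ≤ U i) (hn : ∀ i, n ≤ i → L i = U i)
    {x y : ℕ →₀ ℕ} (hx : P x) (hy : P y) {p : ℕ} (hp : cumS y p < cumS x p) :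
    ∃ (x' y' : ℕ →₀ ℕ) (R : Finset ℕ), P x' ∧ P y' ∧ R ⊆ Finset.range n ∧ p ∈ R ∧
      (∀ k ∈ R, cumS y k < cumS x k) ∧
      (∀ k, cumS x' k + (if k ∈ R then 1 else 0) = cumS x k) ∧
      (∀ k, cumS y' k = cumS y k + (if k ∈ R then 1 else 0)) ∧
      SymExchP P x y x' y' ∧ x' + y' = x + y := by
  have hxb := (hP x).1 hx
  have hyb := (hP y).1 hy
  have hend : ∀ i, n ≤ i → cumS x i = cumS y i := fun i hi => by
    have h1 := hxb i
    have h2 := hyb i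
    have h3 := hn i hi
    omega
  have hpn : p < n := by
    by_contra h
    have := hend p (not_lt.1 h)
    omega
  classical
  have exi : ∃ i, i ≤ p ∧ ∀ k, i ≤ k → k ≤ p → cumS y k < cumS x k :=
    ⟨p, le_rfl, fun k h1 h2 => by rw [le_antisymm h2 h1]; exact hp⟩
  obtain ⟨i, ⟨hip, hi⟩, himin⟩ : ∃ i, (i ≤ p ∧ ∀ k, i ≤ k → k ≤ p → cumS y k < cumS x k) ∧
      ∀ i' < i, ¬ (i' ≤ p ∧ ∀ k, i' ≤ k → k ≤ p → cumS y k < cumS x k) :=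
    ⟨Nat.find exi, Nat.find_spec exi, fun i' h => Nat.find_min exi h⟩
  have exj : ∃ j, p ≤ j ∧ cumS x j ≤ cumS y j := ⟨n, hpn.le, (hend n le_rfl).le⟩
  obtain ⟨j, ⟨hpj, hj⟩, hjmin⟩ : ∃ j, (p ≤ j ∧ cumS x j ≤ cumS y j) ∧
      ∀ j' < j, ¬ (p ≤ j' ∧ cumS x j' ≤ cumS y j') :=
    ⟨Nat.find exj, Nat.find_spec exj, fun i' h => Nat.find_min exj h⟩
  have hjn : j ≤ n := by
    by_contra h
    exact hjmin n (not_le.1 h) ⟨hpn.le, (hend n le_rfl).le⟩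
  have hpj' : p < j := by
    rcases hpj.lt_or_eq with h | h
    · exact h
    · subst h; omega
  have hrun : ∀ k, i ≤ k → k < j → cumS y k < cumS x k := by
    intro k h1 h2
    by_cases hk : k ≤ p
    · exact hi k h1 hk
    · by_contra h
      exact hjmin k h2 ⟨by omega, not_lt.1 h⟩
  have hxi : y i < x i := by
    have h1 := hrun i le_rfl (by omega)
    cases i with
    | zero => simpa [cumS_zero] using h1
    | succ k =>
      have h2 : cumS x k ≤ cumS y k := by
        by_contra h
        apply himin k (Nat.lt_succ_self k)
        refine ⟨by omega, fun l hl1 hl2 => ?_⟩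
        rcases hl1.lt_or_eq with h3 | h3
        · exact hi l h3 hl2
        · subst h3; omega
      rw [cumS_succ, cumS_succ] at h1
      omega
  have hyj : x j < y j := by
    obtain ⟨k, rfl⟩ : ∃ k, j = k + 1 := ⟨j - 1, by omega⟩
    have h1 := hrun k (by omega) (by omega)
    rw [cumS_succ, cumS_succ] at hj
    omega
  obtain ⟨x0, hx0⟩ : ∃ x0, x = x0 + Finsupp.single i 1 :=
    ⟨x - Finsupp.single i 1, (tsub_add_cancel_of_le (by
      rw [Finsupp.single_le_iff]; omega)).symm⟩
  obtain ⟨y0, hy0⟩ : ∃ y0, y = y0 + Finsupp.single j 1 :=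
    ⟨y - Finsupp.single j 1, (tsub_add_cancel_of_le (by
      rw [Finsupp.single_le_iff]; omega)).symm⟩
  have cx : ∀ k, cumS (x0 + Finsupp.single j 1) k + (if k ∈ Finset.Ico i j then 1 else 0)
      = cumS x k := by
    intro k
    rw [hx0, cumS_add, cumS_add, cumS_single, cumS_single]
    simp only [Finset.mem_Ico]
    split_ifs <;> omega
  have cy : ∀ k, cumS (y0 + Finsupp.single i 1) k
      = cumS y k + (if k ∈ Finset.Ico i j then 1 else 0) := by
    intro k
    rw [hy0, cumS_add, cumS_add, cumS_single, cumS_single]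
    simp only [Finset.mem_Ico]
    split_ifs <;> omega
  have px : P (x0 + Finsupp.single j 1) := by
    rw [hP]
    intro k
    have h1 := cx k
    have h2 := hxb k
    have h3 := hyb k
    split_ifs at h1 with h
    · have := hrun k (Finset.mem_Ico.1 h).1 (Finset.mem_Ico.1 h).2
      omega
    · omega
  have py : P (y0 + Finsupp.single i 1) := by
    rw [hP]
    intro k
    have h1 := cy k
    have h2 := hxb k
    have h3 := hyb k
    split_ifs at h1 with h
    · have := hrun k (Finset.mem_Ico.1 h).1 (Finset.mem_Ico.1 h).2
      omega
    · omega
  refine ⟨x0 + Finsupp.single j 1, y0 + Finsupp.single i 1, Finset.Ico i j, px, py, ?_, ?_, ?_,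
    cx, cy, ⟨hx, hy, i, j, hxi, hyj, ?_, ?_, px, py⟩, ?_⟩
  · intro k
    simp only [Finset.mem_Ico, Finset.mem_range]
    omega
  · simp only [Finset.mem_Ico]
    omega
  · intro k hk
    exact hrun k (Finset.mem_Ico.1 hk).1 (Finset.mem_Ico.1 hk).2
  · rw [hx0, add_tsub_cancel_right]
  · rw [hy0, add_right_comm, add_tsub_cancel_right]
  · rw [hx0, hy0]
    abel

def QQ (n : ℕ) (m : ℕ →₀ ℕ) : ℕ := ∑ k ∈ Finset.range n, (cumS m k)^2
def aa (n : ℕ) (m : ℕ →₀ ℕ) : ℕ := ∑ k ∈ Finset.range n, cumS m k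

def Bal (x y : ℕ →₀ ℕ) : Prop := ∀ k, cumS x k ≤ cumS y k ∧ cumS y k ≤ cumS x k + 1

/-- improvement of a pair -/
def Impr (n : ℕ) (x y x' y' : ℕ →₀ ℕ) : Prop :=
  QQ n x' + QQ n y' < QQ n x + QQ n y ∨
  (QQ n x' + QQ n y' = QQ n x + QQ n y ∧ (aa n x)^2 + (aa n y)^2 < (aa n x')^2 + (aa n y')^2)

lemma exch_Q {x y x' y' : ℕ →₀ ℕ} {R : Finset ℕ}
    (h1 : ∀ k ∈ R, cumS y k < cumS x k)
    (h2 : ∀ k, cumS x' k + (if k ∈ R then 1 else 0) = cumS x k)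
    (h3 : ∀ k, cumS y' k = cumS y k + (if k ∈ R then 1 else 0)) (k : ℕ) :
    (cumS x' k)^2 + (cumS y' k)^2 ≤ (cumS x k)^2 + (cumS y k)^2 := by
  have h2 := h2 k
  have h3 := h3 k
  by_cases h : k ∈ R
  · have h1 := h1 k h
    rw [if_pos h] at h2 h3
    rw [← h2] at h1 ⊢
    rw [h3]
    nlinarith
  · rw [if_neg h] at h2 h3
    rw [← h2, h3]
    simp

lemma step_strict {P : (ℕ →₀ ℕ) → Prop} {L U : ℕ → ℕ} {n : ℕ}
    (hP : ∀ m, P m ↔ ∀ i, L i ≤ cumS m i ∧ cumS m i ≤ U i) (hn : ∀ i, n ≤ i → L i = U i)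
    {x y : ℕ →₀ ℕ} (hx : P x) (hy : P y) {p : ℕ} (hp : cumS y p + 2 ≤ cumS x p) :
    ∃ x' y', P x' ∧ P y' ∧ SymExchP P x y x' y' ∧ x' + y' = x + y ∧ Impr n x y x' y' := by
  obtain ⟨x', y', R, hx', hy', hR, hpR, h1, h2, h3, h4, h5⟩ :=
    core_exch hP hn hx hy (p := p) (by omega)
  refine ⟨x', y', hx', hy', h4, h5, Or.inl ?_⟩
  unfold QQ
  rw [← Finset.sum_add_distrib, ← Finset.sum_add_distrib]
  refine Finset.sum_lt_sum (fun k _ => exch_Q h1 h2 h3 k) ⟨p, hR hpR, ?_⟩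
  have h2 := h2 p
  have h3 := h3 p
  rw [if_pos hpR] at h2 h3
  rw [← h2] at hp ⊢
  rw [h3]
  nlinarith

lemma step_flip {P : (ℕ →₀ ℕ) → Prop} {L U : ℕ → ℕ} {n : ℕ}
    (hP : ∀ m, P m ↔ ∀ i, L i ≤ cumS m i ∧ cumS m i ≤ U i) (hn : ∀ i, n ≤ i → L i = U i)
    {x y : ℕ →₀ ℕ} (hx : P x) (hy : P y) {p : ℕ} (hp : cumS y p < cumS x p)
    (ha : aa n x ≤ aa n y) :
    ∃ x' y', P x' ∧ P y' ∧ SymExchP P x y x' y' ∧ x' + y' = x + y ∧ Impr n x y x' y' := by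
  obtain ⟨x', y', R, hx', hy', hR, hpR, h1, h2, h3, h4, h5⟩ :=
    core_exch hP hn hx hy (p := p) (by omega)
  refine ⟨x', y', hx', hy', h4, h5, ?_⟩
  have hQ : QQ n x' + QQ n y' ≤ QQ n x + QQ n y := by
    unfold QQ
    rw [← Finset.sum_add_distrib, ← Finset.sum_add_distrib]
    exact Finset.sum_le_sum (fun k _ => exch_Q h1 h2 h3 k)
  have e1 : aa n x' + ∑ k ∈ Finset.range n, (if k ∈ R then 1 else 0) = aa n x := by
    unfold aa
    rw [← Finset.sum_add_distrib]
    exact Finset.sum_congr rfl (fun k _ => h2 k)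
  have e2 : aa n y' = aa n y + ∑ k ∈ Finset.range n, (if k ∈ R then 1 else 0) := by
    unfold aa
    rw [← Finset.sum_add_distrib]
    exact Finset.sum_congr rfl (fun k _ => h3 k)
  have e3 : 0 < ∑ k ∈ Finset.range n, (if k ∈ R then 1 else 0) :=
    Finset.sum_pos' (fun _ _ => by positivity) ⟨p, hR hpR, by simp [hpR]⟩
  generalize (∑ k ∈ Finset.range n, (if k ∈ R then 1 else 0)) = ρ at e1 e2 e3
  rcases hQ.lt_or_eq with h | h
  · exact Or.inl h
  · refine Or.inr ⟨h, ?_⟩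
    rw [e2, ← e1]
    rw [← e1] at ha
    nlinarith

lemma Impr_symm {n : ℕ} {x y x' y' : ℕ →₀ ℕ} (h : Impr n y x x' y') : Impr n x y x' y' := by
  unfold Impr at *
  rw [add_comm (QQ n x), add_comm (aa n x ^ 2)]
  exact h

lemma step_pair {P : (ℕ →₀ ℕ) → Prop} {L U : ℕ → ℕ} {n : ℕ}
    (hP : ∀ m, P m ↔ ∀ i, L i ≤ cumS m i ∧ cumS m i ≤ U i) (hn : ∀ i, n ≤ i → L i = U i)
    {x y : ℕ →₀ ℕ} (hx : P x) (hy : P y) (h1 : ¬ Bal x y) (h2 : ¬ Bal y x) :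
    ∃ x' y', P x' ∧ P y' ∧ (SymExchP P x y x' y' ∨ SymExchP P y x x' y') ∧
      x' + y' = x + y ∧ Impr n x y x' y' := by
  have main : ∀ x y, P x → P y → 
      (∃ x' y', P x' ∧ P y' ∧ SymExchP P x y x' y' ∧ x' + y' = x + y ∧ Impr n x y x' y') →
      ∃ x' y', P x' ∧ P y' ∧ (SymExchP P x y x' y' ∨ SymExchP P y x x' y') ∧
      x' + y' = x + y ∧ Impr n x y x' y' := by
    rintro x y - - ⟨x', y', a, b, c, d, e⟩
    exact ⟨x', y', a, b, Or.inl c, d, e⟩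
  have main' : ∀ x y, P x → P y → 
      (∃ x' y', P x' ∧ P y' ∧ SymExchP P y x x' y' ∧ x' + y' = y + x ∧ Impr n y x x' y') →
      ∃ x' y', P x' ∧ P y' ∧ (SymExchP P x y x' y' ∨ SymExchP P y x x' y') ∧
      x' + y' = x + y ∧ Impr n x y x' y' := by
    rintro x y - - ⟨x', y', a, b, c, d, e⟩
    exact ⟨x', y', a, b, Or.inr c, d.trans (add_comm _ _), Impr_symm e⟩
  by_cases hA : ∃ p, cumS y p + 2 ≤ cumS x p
  · obtain ⟨p, hp⟩ := hA
    exact main x y hx hy (step_strict hP hn hx hy hp)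
  by_cases hB : ∃ p, cumS x p + 2 ≤ cumS y p
  · obtain ⟨p, hp⟩ := hB
    exact main' x y hx hy (step_strict hP hn hy hx hp)
  simp only [not_exists, not_le] at hA hB
  have hp : ∃ p, cumS y p < cumS x p := by
    by_contra h
    simp only [not_exists, not_lt] at h
    exact h1 fun k => ⟨h k, by have := hB k; omega⟩
  have hq : ∃ p, cumS x p < cumS y p := by
    by_contra h
    simp only [not_exists, not_lt] at h
    exact h2 fun k => ⟨h k, by have := hA k; omega⟩
  obtain ⟨p, hp⟩ := hp
  obtain ⟨q, hq⟩ := hq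
  rcases le_total (aa n x) (aa n y) with ha | ha
  · exact main x y hx hy (step_flip hP hn hx hy hp ha)
  · exact main' x y hx hy (step_flip hP hn hy hx hq ha)

lemma Bal_refl (x : ℕ →₀ ℕ) : Bal x x := fun _ => ⟨le_rfl, by omega⟩

noncomputable def YY {P : (ℕ →₀ ℕ) → Prop} (F : Multiset {m : ℕ →₀ ℕ // P m}) :
    MvPolynomial {m : ℕ →₀ ℕ // P m} ℂ := (F.map MvPolynomial.X).prod

noncomputable def sumB {P : (ℕ →₀ ℕ) → Prop} (F : Multiset {m : ℕ →₀ ℕ // P m}) : ℕ →₀ ℕ :=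
  (F.map Subtype.val).sum

def BalM {P : (ℕ →₀ ℕ) → Prop} (F : Multiset {m : ℕ →₀ ℕ // P m}) : Prop :=
  ∀ x ∈ F, ∀ y ∈ F, Bal x.1 y.1 ∨ Bal y.1 x.1

lemma sumB_cons {P : (ℕ →₀ ℕ) → Prop} (x : {m : ℕ →₀ ℕ // P m}) (F : Multiset {m : ℕ →₀ ℕ // P m}) :
    sumB (x ::ₘ F) = x.1 + sumB F := by simp [sumB]

lemma YY_cons {P : (ℕ →₀ ℕ) → Prop} (x : {m : ℕ →₀ ℕ // P m}) (F : Multiset {m : ℕ →₀ ℕ // P m}) :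
    YY (x ::ₘ F) = MvPolynomial.X x * YY F := by simp [YY]

lemma cumS_sumB {P : (ℕ →₀ ℕ) → Prop} (F : Multiset {m : ℕ →₀ ℕ // P m}) (k : ℕ) :
    cumS (sumB F) k = (F.map (fun x => cumS x.1 k)).sum := by
  induction F using Multiset.induction_on with
  | empty => simp [sumB, cumS]
  | cons a F ih => simp [sumB_cons, cumS_add, ih]

lemma aa_add (n : ℕ) (x y : ℕ →₀ ℕ) : aa n (x + y) = aa n x + aa n y := by
  simp [aa, cumS_add, Finset.sum_add_distrib]

lemma aa_bound {P : (ℕ →₀ ℕ) → Prop} (n : ℕ) (F : Multiset {m : ℕ →₀ ℕ // P m}) :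
    (F.map (fun x => (aa n x.1)^2)).sum ≤ (aa n (sumB F))^2 := by
  induction F using Multiset.induction_on with
  | empty => simp
  | cons a F ih =>
    simp only [sumB_cons, aa_add, Multiset.map_cons, Multiset.sum_cons]
    nlinarith [Nat.zero_le (aa n a.1 * aa n (sumB F))]

lemma reduce_bal {P : (ℕ →₀ ℕ) → Prop} {L U : ℕ → ℕ} {n : ℕ}
    (hP : ∀ m, P m ↔ ∀ i, L i ≤ cumS m i ∧ cumS m i ≤ U i) (hn : ∀ i, n ≤ i → L i = U i)
    (F : Multiset {m : ℕ →₀ ℕ // P m}) :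
    ∃ G : Multiset {m : ℕ →₀ ℕ // P m}, G.card = F.card ∧ sumB G = sumB F ∧
      YY F - YY G ∈ Ideal.span (SEBP P) ∧ BalM G := by
  classical
  let f : Multiset {m : ℕ →₀ ℕ // P m} → ℕ × ℕ := fun F =>
    ((F.map (fun x => QQ n x.1)).sum,
      (aa n (sumB F))^2 - (F.map (fun x => (aa n x.1)^2)).sum)
  have wf : WellFounded (InvImage (Prod.Lex (· < ·) (· < ·)) f) :=
    InvImage.wf f (WellFounded.prod_lex wellFounded_lt wellFounded_lt)
  induction F using wf.induction with
  | _ F ih =>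
  by_cases hF : BalM F
  · exact ⟨F, rfl, rfl, by simp, hF⟩
  · unfold BalM at hF
    push Not at hF
    obtain ⟨x, hx, y, hy, hxy, hyx⟩ := hF
    obtain ⟨F', rfl⟩ := Multiset.exists_cons_of_mem hx
    have hy' : y ∈ F' := by
      rcases Multiset.mem_cons.1 hy with h | h
      · subst h
        exact absurd (Bal_refl _) hxy
      · exact h
    obtain ⟨H, rfl⟩ := Multiset.exists_cons_of_mem hy'
    obtain ⟨x', y', hx', hy', he, hs, hI⟩ := step_pair hP hn x.2 y.2 hxy hyx
    have hsum : sumB (⟨x', hx'⟩ ::ₘ ⟨y', hy'⟩ ::ₘ H) = sumB (x ::ₘ y ::ₘ H) := by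
      simp only [sumB_cons]
      rw [← add_assoc, ← add_assoc, hs]
    obtain ⟨G, hG1, hG2, hG3, hG4⟩ := ih (⟨x', hx'⟩ ::ₘ ⟨y', hy'⟩ ::ₘ H) (by
      have hb := aa_bound n (⟨x', hx'⟩ ::ₘ ⟨y', hy'⟩ ::ₘ H)
      have hb' := aa_bound n (x ::ₘ y ::ₘ H)
      simp only [InvImage, f, Prod.lex_def]
      rw [hsum] at hb ⊢
      simp only [Multiset.map_cons, Multiset.sum_cons] at hb hb' ⊢
      rcases hI with h | ⟨h1, h2⟩
      · left; omega
      · right; exact ⟨by omega, by omega⟩)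
    refine ⟨G, by simpa using hG1, hG2.trans hsum, ?_, hG4⟩
    have hm : MvPolynomial.X x * MvPolynomial.X y
        - MvPolynomial.X ⟨x', hx'⟩ * MvPolynomial.X ⟨y', hy'⟩ ∈ Ideal.span (SEBP P) := by
      rcases he with h | h
      · exact Ideal.subset_span ⟨x, y, ⟨x', hx'⟩, ⟨y', hy'⟩, h, rfl⟩
      · exact Ideal.subset_span ⟨y, x, ⟨x', hx'⟩, ⟨y', hy'⟩, h, by rw [mul_comm (MvPolynomial.X x)]⟩
    have := Ideal.add_mem _ (Ideal.mul_mem_right (YY H) _ hm) hG3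
    convert this using 1
    simp only [YY_cons]
    ring

lemma exists_max {P : (ℕ →₀ ℕ) → Prop} (F : Multiset {m : ℕ →₀ ℕ // P m}) (hF : BalM F)
    (h0 : F ≠ 0) : ∃ x H, F = x ::ₘ H ∧ ∀ y ∈ H, Bal y.1 x.1 := by
  induction F using Multiset.induction_on with
  | empty => exact absurd rfl h0
  | cons a F ih =>
    by_cases hF0 : F = 0
    · exact ⟨a, F, rfl, by simp [hF0]⟩
    · obtain ⟨x, H, rfl, hH⟩ := ih (fun x hx y hy => hF x (Multiset.mem_cons_of_mem hx) y
        (Multiset.mem_cons_of_mem hy)) hF0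
      rcases hF a (by simp) x (by simp) with h | h
      · refine ⟨x, a ::ₘ H, Multiset.cons_swap _ _ _, ?_⟩
        intro y hy
        rcases Multiset.mem_cons.1 hy with rfl | hy
        · exact h
        · exact hH y hy
      · refine ⟨a, x ::ₘ H, rfl, ?_⟩
        intro y hy
        rcases Multiset.mem_cons.1 hy with rfl | hy
        · exact h
        · rcases hF y (by simp [hy]) a (by simp) with h' | h'
          · exact h'
          · intro k
            have h1 := h k
            have h2 := h' k
            have h3 := hH y hy k
            omega

lemma sum_bounds {P : (ℕ →₀ ℕ) → Prop} {x : ℕ →₀ ℕ} (H : Multiset {m : ℕ →₀ ℕ // P m})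
    (hH : ∀ y ∈ H, Bal y.1 x) (k : ℕ) :
    cumS (sumB H) k ≤ H.card * cumS x k ∧ H.card * cumS x k ≤ cumS (sumB H) k + H.card := by
  induction H using Multiset.induction_on with
  | empty => simp [sumB, cumS]
  | cons a H ih =>
    have h1 := ih fun y hy => hH y (Multiset.mem_cons_of_mem hy)
    have h2 := hH a (by simp) k
    rw [sumB_cons, cumS_add, Multiset.card_cons, add_mul]
    omega

lemma bal_unique {P : (ℕ →₀ ℕ) → Prop} (d : ℕ) (F G : Multiset {m : ℕ →₀ ℕ // P m})
    (hF : BalM F) (hG : BalM G) (hFd : F.card = d) (hGd : G.card = d) (hs : sumB F = sumB G) :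
    F = G := by
  induction d generalizing F G with
  | zero =>
    rw [Multiset.card_eq_zero] at hFd hGd
    rw [hFd, hGd]
  | succ d ih =>
    obtain ⟨x, H, rfl, hH⟩ := exists_max F hF (by rintro rfl; simp at hFd)
    obtain ⟨y, K, rfl, hK⟩ := exists_max G hG (by rintro rfl; simp at hGd)
    simp only [Multiset.card_cons, Nat.add_right_cancel_iff] at hFd hGd
    rw [sumB_cons, sumB_cons] at hs
    have hxy : x = y := by
      apply Subtype.ext
      apply cumS_inj
      intro k
      have h1 := sum_bounds H hH k
      have h2 := sum_bounds K hK k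
      have h3 := congrArg (fun m => cumS m k) hs
      simp only [cumS_add] at h3
      rw [hFd] at h1
      rw [hGd] at h2
      rcases lt_trichotomy (cumS x.1 k) (cumS y.1 k) with h | h | h
      · have := Nat.mul_le_mul_left d (Nat.succ_le_of_lt h)
        rw [Nat.succ_eq_add_one, Nat.mul_add] at this
        omega
      · exact h
      · have := Nat.mul_le_mul_left d (Nat.succ_le_of_lt h)
        rw [Nat.succ_eq_add_one, Nat.mul_add] at this
        omega
    subst hxy
    rw [ih H K (fun x hx y hy => hF x (Multiset.mem_cons_of_mem hx) y (Multiset.mem_cons_of_mem hy))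
      (fun x hx y hy => hG x (Multiset.mem_cons_of_mem hx) y (Multiset.mem_cons_of_mem hy))
      hFd hGd (add_left_cancel hs)]

lemma YY_congr {P : (ℕ →₀ ℕ) → Prop} {L U : ℕ → ℕ} {n r : ℕ} (hr : 0 < r)
    (hP : ∀ m, P m ↔ ∀ i, L i ≤ cumS m i ∧ cumS m i ≤ U i)
    (hL : ∀ i, n ≤ i → L i = r) (hU : ∀ i, n ≤ i → U i = r)
    (F G : Multiset {m : ℕ →₀ ℕ // P m}) (hs : sumB F = sumB G) :
    YY F - YY G ∈ Ideal.span (SEBP P) := by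
  have hn : ∀ i, n ≤ i → L i = U i := fun i hi => by rw [hL i hi, hU i hi]
  have hcard : ∀ F : Multiset {m : ℕ →₀ ℕ // P m}, cumS (sumB F) n = F.card * r := by
    intro F
    rw [cumS_sumB]
    have : ∀ x : {m : ℕ →₀ ℕ // P m}, cumS x.1 n = r := fun x => by
      have h1 := (hP _).1 x.2 n
      rw [hL n le_rfl, hU n le_rfl] at h1
      omega
    simp [this]
  have hc : F.card = G.card := by
    have h1 := hcard F
    rw [hs, hcard G] at h1
    exact (Nat.eq_of_mul_eq_mul_right hr h1).symm
  obtain ⟨F', f1, f2, f3, f4⟩ := reduce_bal hP hn F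
  obtain ⟨G', g1, g2, g3, g4⟩ := reduce_bal hP hn G
  have : F' = G' := bal_unique F.card F' G' f4 g4 f1 (g1.trans hc.symm) (by rw [f2, g2, hs])
  subst this
  have := Ideal.sub_mem _ f3 g3
  convert this using 1
  ring

lemma toric_YY {P : (ℕ →₀ ℕ) → Prop} (F : Multiset {m : ℕ →₀ ℕ // P m}) :
    toricMapP P (YY F) = MvPolynomial.monomial (sumB F) 1 := by
  induction F using Multiset.induction_on with
  | empty => simp [YY, sumB]
  | cons a F ih =>
    rw [YY_cons, sumB_cons, map_mul, ih]
    simp [toricMapP, MvPolynomial.monomial_mul]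

lemma monomial_YY {P : (ℕ →₀ ℕ) → Prop} (u : {m : ℕ →₀ ℕ // P m} →₀ ℕ) :
    ∃ F : Multiset {m : ℕ →₀ ℕ // P m}, MvPolynomial.monomial u (1:ℂ) = YY F := by
  induction u using Finsupp.induction_linear with
  | zero => exact ⟨0, by simp [YY]⟩
  | add u v hu hv =>
    obtain ⟨F, hF⟩ := hu
    obtain ⟨G, hG⟩ := hv
    refine ⟨F + G, ?_⟩
    have : (MvPolynomial.monomial (u + v) (1:ℂ)) =
      MvPolynomial.monomial u 1 * MvPolynomial.monomial v 1 := by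
      rw [MvPolynomial.monomial_mul, one_mul]
    rw [this, hF, hG]
    simp [YY]
  | single a k => exact ⟨Multiset.replicate k a, by simp [YY, MvPolynomial.X_pow_eq_monomial]⟩

lemma ker_le {P : (ℕ →₀ ℕ) → Prop} (I : Ideal (MvPolynomial {m : ℕ →₀ ℕ // P m} ℂ))
    (hI : ∀ F G : Multiset {m : ℕ →₀ ℕ // P m}, sumB F = sumB G → YY F - YY G ∈ I) :
    RingHom.ker (toricMapP P) ≤ I := by
  classical
  let g : MvPolynomial ℕ ℂ →ₗ[ℂ] (MvPolynomial {m : ℕ →₀ ℕ // P m} ℂ ⧸ I) :=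
    (MvPolynomial.basisMonomials ℕ ℂ).constr ℂ (fun t =>
      if h : ∃ F : Multiset {m : ℕ →₀ ℕ // P m}, sumB F = t then Ideal.Quotient.mk I (YY h.choose)
      else 0)
  have hg : g ∘ₗ (toricMapP P).toLinearMap = (Ideal.Quotient.mkₐ ℂ I).toLinearMap := by
    apply (MvPolynomial.basisMonomials _ ℂ).ext
    intro u
    obtain ⟨F, hF⟩ := monomial_YY u
    simp only [MvPolynomial.coe_basisMonomials, LinearMap.comp_apply, AlgHom.toLinearMap_apply,
      hF, toric_YY]
    have h1 : g (MvPolynomial.monomial (sumB F) 1) =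
      if h : ∃ G : Multiset {m : ℕ →₀ ℕ // P m}, sumB G = sumB F then
        Ideal.Quotient.mk I (YY h.choose) else 0 := by
      have := (MvPolynomial.basisMonomials ℕ ℂ).constr_basis ℂ (fun t =>
        if h : ∃ F : Multiset {m : ℕ →₀ ℕ // P m}, sumB F = t then
          Ideal.Quotient.mk I (YY h.choose) else 0) (sumB F)
      simpa only [MvPolynomial.coe_basisMonomials] using this
    have hex : ∃ G : Multiset {m : ℕ →₀ ℕ // P m}, sumB G = sumB F := ⟨F, rfl⟩
    rw [h1, dif_pos hex]
    exact Ideal.Quotient.eq.2 (hI _ _ hex.choose_spec)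
  intro p hp
  have h2 := congrArg (fun l => l p) hg
  simp only [LinearMap.comp_apply, AlgHom.toLinearMap_apply] at h2
  rw [RingHom.mem_ker] at hp
  rw [hp, map_zero] at h2
  exact Ideal.Quotient.eq_zero_iff_mem.1 h2.symm

lemma SEBP_le {P : (ℕ →₀ ℕ) → Prop} : Ideal.span (SEBP P) ≤ RingHom.ker (toricMapP P) := by
  rw [Ideal.span_le]
  rintro p ⟨m, m', nn, nn', ⟨_, _, i, j, hi, hj, h1, h2, _, _⟩, rfl⟩
  have : m.1 + m'.1 = nn.1 + nn'.1 := by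
    rw [h1, h2]
    ext k
    simp only [Finsupp.add_apply, Finsupp.tsub_apply, Finsupp.single_apply]
    split_ifs with h h' h'
    · subst h; subst h'; omega
    · subst h; omega
    · subst h'; omega
    · omega
  simp [RingHom.mem_ker, toricMapP, MvPolynomial.monomial_mul, this]

/-- The toric ideal of a lattice path polymatroid is generated by its symmetric
exchange binomials. -/
theorem stmt4 (n r : ℕ) (hn : 0 < n) (hr : 0 < r) (α ω : Finset ℕ)
    (hα : IsLatticePath n r α) (hω : IsLatticePath n r ω) (hαω : PathAbove α ω) :
    RingHom.ker (toricMapP (IsLPBasis n r α ω)) = Ideal.span (SEBP (IsLPBasis n r α ω)) := by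
  apply le_antisymm
  · apply ker_le
    exact YY_congr hr (basis_iff hα hω) (fun i hi => path_cum_ge hω hi)
      (fun i hi => path_cum_ge hα hi)
  · exact SEBP_le
end

section
/- Let α ⪰ ω be lattice paths from (0,0) to (n,r) and let μ be a monomial such that the symmetric exchange graph G(μ) of Γ(α,ω) is nonempty. Then G(μ) has exactly one thin vertex: there is a unique multiset V = {σ_1, …, σ_t} of paths between α and ω with m(σ_1)⋯m(σ_t) = μ such that any two paths in V are comparable under ⪰ and, for each i, the i-th east steps of any two paths in V are at most a unit length apart. -/
/-- The height of the `k`-th east step of `σ` (0-indexed): if the east steps of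
`σ` occur at positions `a_0 < a_1 < ⋯`, the `k`-th east step has height
`a_k - (k + 1)`. -/
def eastHeight (n r : ℕ) (σ : Finset ℕ) (k : ℕ) : ℕ :=
  (((Finset.Icc 1 (n + r)) \ σ).sort (· ≤ ·)).getD k 0 - (k + 1)

/-- A vertex (multiset of paths) is thin if its paths are pairwise comparable
under `⪰` and the corresponding east steps of any two of its paths are at most
a unit length apart. -/
def ThinV (n r : ℕ) (V : Multiset (Finset ℕ)) : Prop :=
  (∀ σ ∈ V, ∀ τ ∈ V, PathAbove σ τ ∨ PathAbove τ σ) ∧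
  (∀ σ ∈ V, ∀ τ ∈ V, ∀ k < n, eastHeight n r σ k ≤ eastHeight n r τ k + 1)

/-- partial sums -/
def lpS (m : ℕ →₀ ℕ) (k : ℕ) : ℕ := ∑ i ∈ Finset.range (k+1), m i

/-- heights -/
noncomputable def lpH (σ : Finset ℕ) (k : ℕ) : ℕ := lpS (pathMonomial σ) k

lemma lpS_ext {a b : ℕ →₀ ℕ} (h : ∀ k, lpS a k = lpS b k) : a = b := by
  ext i
  cases i with
  | zero => simpa [lpS] using h 0
  | succ i =>
    have h1 := h i
    have h2 := h (i+1)
    unfold lpS at h1 h2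
    rw [Finset.sum_range_succ, Finset.sum_range_succ _ (i+1), h1] at h2
    omega

lemma lpS_sum (V : Multiset (Finset ℕ)) (k : ℕ) :
    lpS (V.map pathMonomial).sum k = (V.map (fun σ => lpH σ k)).sum := by
  induction V using Multiset.induction_on with
  | empty => simp [lpS]
  | cons a s ih =>
    simp only [Multiset.map_cons, Multiset.sum_cons, ← ih]
    simp [lpS, lpH, Finset.sum_add_distrib]

lemma lpH_eq (σ : Finset ℕ) (k : ℕ) :
    lpH σ k = (σ.filter (fun a => eastBefore σ a ≤ k)).card := by
  unfold lpH lpS pathMonomial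
  simp only [Finsupp.finsetSum_apply, Finsupp.single_apply]
  rw [Finset.sum_comm, Finset.card_filter]
  refine Finset.sum_congr rfl fun a _ => ?_
  rw [Finset.sum_ite_eq]
  simp [Nat.lt_succ_iff]

lemma lpH_mono (σ : Finset ℕ) : Monotone (lpH σ) := by
  intro a b hab
  rw [lpH_eq, lpH_eq]
  refine Finset.card_le_card fun x hx => ?_
  simp only [Finset.mem_filter] at hx ⊢
  exact ⟨hx.1, hx.2.trans hab⟩

lemma card_lt_emb {c : ℕ} (s : Finset ℕ) (h : s.card = c) (j : Fin c) :
    (s.filter (fun a => a < s.orderEmbOfFin h j)).card = j := by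
  have : s.filter (fun a => a < s.orderEmbOfFin h j)
      = (Finset.Iio j).map (s.orderEmbOfFin h).toEmbedding := by
    ext a
    simp only [Finset.mem_filter, Finset.mem_map, Finset.mem_Iio]
    constructor
    · rintro ⟨ha, hlt⟩
      have : a ∈ Set.range (s.orderEmbOfFin h) := by
        rw [Finset.range_orderEmbOfFin]; exact ha
      obtain ⟨i, rfl⟩ := this
      exact ⟨i, by simpa using hlt, rfl⟩
    · rintro ⟨i, hi, rfl⟩
      exact ⟨Finset.orderEmbOfFin_mem _ _ _, by simpa using hi⟩
  rw [this, Finset.card_map, Fin.card_Iio]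

lemma eastBefore_add {n r : ℕ} {σ : Finset ℕ} (hσ : IsLatticePath n r σ) (a : ℕ) (ha : 1 ≤ a) :
    eastBefore σ a + (σ.filter (fun b => b < a)).card + 1 = a := by
  unfold eastBefore
  have h1 : σ.filter (fun b => b < a) = (Finset.Icc 1 (a-1)).filter (fun b => b ∈ σ) := by
    ext b
    simp only [Finset.mem_filter, Finset.mem_Icc]
    constructor
    · rintro ⟨h, h'⟩
      have := Finset.mem_Icc.1 (hσ.1 h)
      exact ⟨by omega, h⟩
    · rintro ⟨h, h'⟩
      exact ⟨h', by omega⟩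
  rw [h1]
  have := Finset.card_filter_add_card_filter_not (s := Finset.Icc 1 (a-1)) (fun b => b ∈ σ)
  rw [Nat.card_Icc] at this
  omega

lemma eastBefore_mono (σ : Finset ℕ) : Monotone (eastBefore σ) := by
  intro a b hab
  unfold eastBefore
  refine Finset.card_le_card (Finset.filter_subset_filter _ ?_)
  exact Finset.Icc_subset_Icc le_rfl (by omega)

lemma emb_eq {n r : ℕ} {σ : Finset ℕ} (hσ : IsLatticePath n r σ) (j : Fin r) :
    σ.orderEmbOfFin hσ.2 j = eastBefore σ (σ.orderEmbOfFin hσ.2 j) + j + 1 := by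
  have h1 := Finset.mem_Icc.1 (hσ.1 (σ.orderEmbOfFin_mem hσ.2 j))
  have := eastBefore_add hσ _ h1.1
  rw [card_lt_emb] at this
  omega

/-- number of lines -/
lemma lpH_lt {n r : ℕ} {σ : Finset ℕ} (hσ : IsLatticePath n r σ) (j : Fin r) (k : ℕ) :
    (j : ℕ) < lpH σ k ↔ eastBefore σ (σ.orderEmbOfFin hσ.2 j) ≤ k := by
  rw [lpH_eq]
  constructor
  · intro h
    by_contra hk
    push Not at hk
    have : σ.filter (fun a => eastBefore σ a ≤ k) ⊆
        σ.filter (fun a => a < σ.orderEmbOfFin hσ.2 j) := by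
      intro a ha
      simp only [Finset.mem_filter] at ha ⊢
      refine ⟨ha.1, ?_⟩
      by_contra hlt
      push Not at hlt
      have := eastBefore_mono σ hlt
      omega
    have := Finset.card_le_card this
    rw [card_lt_emb] at this
    omega
  · intro h
    have : insert (σ.orderEmbOfFin hσ.2 j) (σ.filter (fun a => a < σ.orderEmbOfFin hσ.2 j)) ⊆
       σ.filter (fun a => eastBefore σ a ≤ k) := by
      intro a ha
      simp only [Finset.mem_insert, Finset.mem_filter] at ha ⊢
      rcases ha with rfl | ha
      · exact ⟨Finset.orderEmbOfFin_mem _ _ _, h⟩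
      · exact ⟨ha.1, (eastBefore_mono σ ha.2.le).trans h⟩
    have := Finset.card_le_card this
    rw [Finset.card_insert_of_notMem (by simp), card_lt_emb] at this
    omega

lemma lpH_le {n r : ℕ} {σ : Finset ℕ} (hσ : IsLatticePath n r σ) (k : ℕ) : lpH σ k ≤ r := by
  rw [lpH_eq, ← hσ.2]
  exact Finset.card_filter_le _ _

lemma lpH_top {n r : ℕ} {σ : Finset ℕ} (hσ : IsLatticePath n r σ) (k : ℕ) (hk : n ≤ k) :
    lpH σ k = r := by
  rw [lpH_eq, Finset.filter_true_of_mem, hσ.2]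
  intro a ha
  refine le_trans ?_ hk
  have h1 := Finset.mem_Icc.1 (hσ.1 ha)
  have : (Finset.Icc 1 (a-1)).filter (fun b => b ∉ σ) ⊆ Finset.Icc 1 (n+r) \ σ := by
    intro b hb
    simp only [Finset.mem_filter, Finset.mem_Icc, Finset.mem_sdiff] at hb ⊢
    exact ⟨by omega, hb.2⟩
  have := Finset.card_le_card this
  rw [Finset.card_sdiff_of_subset hσ.1, hσ.2, Nat.card_Icc] at this
  unfold eastBefore
  omega

lemma pathAbove_iff_emb {r : ℕ} {σ τ : Finset ℕ} (hσ : σ.card = r) (hτ : τ.card = r) :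
    PathAbove σ τ ↔ ∀ j : Fin r, σ.orderEmbOfFin hσ j ≤ τ.orderEmbOfFin hτ j := by
  unfold PathAbove
  constructor
  · intro h j
    have := h j (by simp [hσ]) (by simp [hτ])
    simpa [Finset.orderEmbOfFin_apply] using this
  · intro h k h1 h2
    have h3 : k < r := by simpa [hσ] using h1
    have := h ⟨k, h3⟩
    simpa [Finset.orderEmbOfFin_apply] using this

lemma pathAbove_iff {n r : ℕ} {σ τ : Finset ℕ} (hσ : IsLatticePath n r σ)
    (hτ : IsLatticePath n r τ) : PathAbove σ τ ↔ ∀ k, lpH τ k ≤ lpH σ k := by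
  rw [pathAbove_iff_emb hσ.2 hτ.2]
  constructor
  · intro h k
    by_contra hk
    push Not at hk
    have hr := lpH_le hτ k
    have h1 := (lpH_lt hτ ⟨lpH σ k, by omega⟩ k).1 hk
    have h2 := h ⟨lpH σ k, by omega⟩
    rw [emb_eq hσ, emb_eq hτ] at h2
    have h3 := (lpH_lt hσ ⟨lpH σ k, by omega⟩ k).2 (by omega)
    simp at h3
  · intro h j
    rw [emb_eq hσ, emb_eq hτ]
    have := (lpH_lt hσ j _).1 (((lpH_lt hτ j _).2 le_rfl).trans_le (h _))
    omega

lemma lpH_inj {n r : ℕ} {σ τ : Finset ℕ} (hσ : IsLatticePath n r σ)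
    (hτ : IsLatticePath n r τ) (h : ∀ k, lpH σ k = lpH τ k) : σ = τ := by
  have h1 := (pathAbove_iff_emb hσ.2 hτ.2).1 ((pathAbove_iff hσ hτ).2 fun k => (h k).ge)
  have h2 := (pathAbove_iff_emb hτ.2 hσ.2).1 ((pathAbove_iff hτ hσ).2 fun k => (h k).le)
  have : ⇑(σ.orderEmbOfFin hσ.2) = ⇑(τ.orderEmbOfFin hτ.2) :=
    funext fun j => le_antisymm (h1 j) (h2 j)
  have h3 := congrArg Set.range this
  rw [Finset.range_orderEmbOfFin, Finset.range_orderEmbOfFin] at h3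
  exact_mod_cast h3

lemma eastHeight_eq {n r : ℕ} {σ : Finset ℕ} (hσ : IsLatticePath n r σ) (k : ℕ) (hk : k < n) :
    eastHeight n r σ k = lpH σ k := by
  set s := Finset.Icc 1 (n+r) \ σ with hs
  have hc : s.card = n := by
    rw [hs, Finset.card_sdiff_of_subset hσ.1, hσ.2, Nat.card_Icc]; omega
  have he : (s.sort (· ≤ ·)).getD k 0 = s.orderEmbOfFin hc ⟨k, hk⟩ := by
    rw [Finset.orderEmbOfFin_apply, List.getD_eq_getElem _ _ (by simpa [hc] using hk)]
    try simp
  unfold eastHeight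
  rw [← hs, he]
  have hmem := s.orderEmbOfFin_mem hc ⟨k, hk⟩
  have hcard := card_lt_emb s hc ⟨k, hk⟩
  set e := s.orderEmbOfFin hc ⟨k, hk⟩
  have hm := hmem
  rw [hs, Finset.mem_sdiff, Finset.mem_Icc] at hm
  have heb : eastBefore σ e = k := by
    rw [← show _ = k from hcard]
    unfold eastBefore
    congr 1
    ext b
    simp only [hs, Finset.mem_filter, Finset.mem_Icc, Finset.mem_sdiff]
    constructor
    · rintro ⟨h1, h2⟩; exact ⟨⟨by omega, h2⟩, by omega⟩
    · rintro ⟨⟨h1, h2⟩, h3⟩; exact ⟨by omega, h2⟩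
  have hadd := eastBefore_add hσ e hm.1.1
  have hH : lpH σ k = (σ.filter (fun b => b < e)).card := by
    rw [lpH_eq]
    congr 1
    ext a
    simp only [Finset.mem_filter]
    refine and_congr_right fun ha => ⟨fun h => ?_, fun h => ?_⟩
    · by_contra hlt
      have hne : a ≠ e := fun h => hm.2 (h ▸ ha)
      have hle : e + 1 ≤ a := by omega
      have h1 := eastBefore_mono σ hle
      have h2 := eastBefore_add hσ (e+1) (by omega)
      have h3 : σ.filter (fun b => b < e + 1) = σ.filter (fun b => b < e) := by
        ext b
        simp only [Finset.mem_filter]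
        refine and_congr_right fun hb => ?_
        have hne : b ≠ e := fun h => hm.2 (h ▸ hb)
        omega
      rw [h3] at h2
      omega
    · rw [← heb]; exact eastBefore_mono σ h.le
  omega

lemma exists_path (n r : ℕ) (f : ℕ → ℕ) (hf : Monotone f) (hr : ∀ k, n ≤ k → f k = r) :
    ∃ σ, IsLatticePath n r σ ∧ ∀ k, lpH σ k = f k := by
  let q : ℕ → ℕ := fun j => ((Finset.range n).filter (fun k => f k ≤ j)).card
  have hq : Monotone q := by
    intro a b hab
    refine Finset.card_le_card fun x hx => ?_
    simp only [Finset.mem_filter] at hx ⊢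
    exact ⟨hx.1, hx.2.trans hab⟩
  have hqn : ∀ j, q j ≤ n := fun j => by
    simpa using Finset.card_filter_le (Finset.range n) (fun k => f k ≤ j)
  have hfr : ∀ k, f k ≤ r := fun k => by
    have := hf (Nat.le_max_left k n)
    rwa [hr _ (Nat.le_max_right k n)] at this
  have hqk : ∀ j < r, ∀ k, q j ≤ k ↔ j < f k := by
    intro j hj k
    constructor
    · intro h
      by_contra hlt
      push Not at hlt
      have hkn : k < n := by
        by_contra hh
        have := hr k (by omega)
        omega
      have : Finset.range (k+1) ⊆ (Finset.range n).filter (fun k => f k ≤ j) := by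
        intro i hi
        simp only [Finset.mem_filter, Finset.mem_range] at hi ⊢
        exact ⟨by omega, (hf (Nat.lt_succ_iff.1 hi)).trans hlt⟩
      have := Finset.card_le_card this
      rw [Finset.card_range] at this
      change k + 1 ≤ q j at this
      omega
    · intro h
      have : (Finset.range n).filter (fun k => f k ≤ j) ⊆ Finset.range k := by
        intro i hi
        simp only [Finset.mem_filter, Finset.mem_range] at hi ⊢
        by_contra hh
        have := hf (show k ≤ i by omega)
        omega
      have := Finset.card_le_card this
      rwa [Finset.card_range] at this
  let p : Fin r → ℕ := fun j => q j + j + 1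
  have hp : StrictMono p := by
    intro a b hab
    have h1 : (a : ℕ) < b := hab
    have := hq h1.le
    change q a + a + 1 < q b + b + 1
    omega
  let σ := Finset.univ.image p
  have hσ : IsLatticePath n r σ := by
    constructor
    · intro a ha
      simp only [σ, Finset.mem_image, Finset.mem_univ, true_and] at ha
      obtain ⟨j, rfl⟩ := ha
      have := hqn j
      have := j.2
      simp only [Finset.mem_Icc, p]
      omega
    · rw [Finset.card_image_of_injective _ hp.injective]; simp
  have hemb : ⇑(σ.orderEmbOfFin hσ.2) = p :=
    (Finset.orderEmbOfFin_unique hσ.2 (fun x => by simp [σ]) hp).symm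
  refine ⟨σ, hσ, fun k => ?_⟩
  have key : ∀ j : Fin r, (j : ℕ) < lpH σ k ↔ (j : ℕ) < f k := by
    intro j
    rw [lpH_lt hσ, ← hqk j j.2]
    have := emb_eq hσ j
    rw [hemb] at this ⊢
    have h2 : p j = q j + j + 1 := rfl
    have : eastBefore σ (p j) = q j := by omega
    rw [this]
  have h1 := lpH_le hσ k
  have h2 := hfr k
  apply le_antisymm
  · by_contra h
    have := (key ⟨f k, by omega⟩).1 (by simpa using h)
    simp at this
  · by_contra h
    have := (key ⟨lpH σ k, by omega⟩).2 (by simpa using h)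
    simp at this

lemma hermite (t : ℕ) (ht : 0 < t) (S : ℕ) : ∑ j ∈ Finset.range t, (S + j) / t = S := by
  induction S with
  | zero =>
    refine Finset.sum_eq_zero fun j hj => ?_
    rw [Nat.div_eq_of_lt]
    simpa using hj
  | succ S ih =>
    have h1 := Finset.sum_range_succ (fun j => (S + j) / t) t
    have h2 := Finset.sum_range_succ' (fun j => (S + j) / t) t
    rw [h1, ih] at h2
    rw [Nat.add_div_right _ ht] at h2
    simp only [add_zero] at h2
    have h3 : ∀ j, S + 1 + j = S + (j + 1) := fun j => by omega
    simp only [h3]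
    omega

lemma thin_fun_le (t : ℕ) (g g' : Fin t → ℕ) (hg : Monotone g) (hg' : Monotone g')
    (h1 : ∀ i j, g i ≤ g j + 1) (h1' : ∀ i j, g' i ≤ g' j + 1)
    (hs : ∑ i, g i = ∑ i, g' i) (j : Fin t) : g' j ≤ g j := by
  by_contra h
  push Not at h
  have hle : ∀ i, g i ≤ g' i := by
    intro i
    rcases le_total i j with hij | hij
    · have := hg hij
      have := h1' j i
      omega
    · have := hg' hij
      have := h1 i j
      omega
  have := Finset.sum_lt_sum (s := Finset.univ) (fun i _ => hle i) ⟨j, Finset.mem_univ _, h⟩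
  omega

/-- sorted list representation of a thin vertex -/
lemma thin_list {n r : ℕ} {V : Multiset (Finset ℕ)} (hV : ∀ σ ∈ V, IsLatticePath n r σ)
    (hT : ThinV n r V) : ∃ g : Fin V.card → Finset ℕ, V = Finset.univ.val.map g ∧
      (∀ i, IsLatticePath n r (g i)) ∧
      (∀ k, Monotone fun i => lpH (g i) k) ∧ ∀ k i j, lpH (g i) k ≤ lpH (g j) k + 1 := by
  classical
  let w : Finset ℕ → ℕ := fun σ => ∑ k ∈ Finset.range n, lpH σ k
  let R : Finset ℕ → Finset ℕ → Prop := fun σ τ => w σ ≤ w τ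
  haveI : Std.Total R := ⟨fun a b => le_total (w a) (w b)⟩
  haveI : IsTrans _ R := ⟨fun a b c => le_trans (a := w a)⟩
  let L := V.toList.insertionSort R
  have hLV : (L : Multiset (Finset ℕ)) = V := by
    rw [← Multiset.coe_toList V]
    exact Multiset.coe_eq_coe.2 (List.perm_insertionSort R _)
  have hlen : L.length = V.card := by rw [← hLV]; rfl
  have hmem : ∀ σ ∈ L, σ ∈ V := fun σ h => by rw [← hLV]; exact h
  have hsort : L.Pairwise R := List.pairwise_insertionSort R _
  have hR : ∀ σ ∈ V, ∀ τ ∈ V, R σ τ → ∀ k, lpH σ k ≤ lpH τ k := by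
    intro σ hσ τ hτ h k
    rcases hT.1 σ hσ τ hτ with h' | h'
    · rw [pathAbove_iff (hV σ hσ) (hV τ hτ)] at h'
      by_cases hk : k < n
      · by_contra hlt
        push Not at hlt
        have : w τ < w σ := Finset.sum_lt_sum (fun i _ => h' i) ⟨k, Finset.mem_range.2 hk, hlt⟩
        exact absurd h (not_le.2 this)
      · rw [lpH_top (hV σ hσ) k (by omega), lpH_top (hV τ hτ) k (by omega)]
    · exact (pathAbove_iff (hV τ hτ) (hV σ hσ)).1 h' k
  have hgm : ∀ i : Fin V.card, L.get (i.cast hlen.symm) ∈ V := fun i => hmem _ (List.get_mem _ _)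
  refine ⟨fun i => L.get (i.cast hlen.symm), ?_, fun i => hV _ (hgm i), ?_, ?_⟩
  · conv_lhs => rw [← hLV]
    rw [Fin.univ_val_map]
    congr 1
    apply List.ext_getElem
    · simp [hlen]
    · intro i h1 h2
      simp
  · intro k i j hij
    rcases hij.eq_or_lt with rfl | hlt
    · exact le_rfl
    · exact hR _ (hgm i) _ (hgm j) (List.pairwise_iff_get.1 hsort _ _ hlt) k
  · intro k i j
    by_cases hk : k < n
    · have := hT.2 _ (hgm i) _ (hgm j) k hk
      rwa [eastHeight_eq (hV _ (hgm i)) k hk, eastHeight_eq (hV _ (hgm j)) k hk] at this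
    · have h1 := lpH_top (hV _ (hgm i)) k (by omega)
      have h2 := lpH_top (hV _ (hgm j)) k (by omega)
      change lpH (L.get _) k ≤ lpH (L.get _) k + 1
      rw [h1, h2]
      omega

lemma sum_top {n r : ℕ} {V : Multiset (Finset ℕ)} (hV : ∀ σ ∈ V, IsLatticePath n r σ) 
    (k : ℕ) (hk : n ≤ k) : (V.map (fun σ => lpH σ k)).sum = V.card * r := by
  rw [Multiset.map_congr rfl (fun σ hσ => lpH_top (hV σ hσ) k hk)]
  simp

lemma thin_unique {n r : ℕ} (hr : 0 < r) {V W : Multiset (Finset ℕ)}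
    (hV : ∀ σ ∈ V, IsLatticePath n r σ) (hTV : ThinV n r V)
    (hW : ∀ σ ∈ W, IsLatticePath n r σ) (hTW : ThinV n r W)
    (h : (V.map pathMonomial).sum = (W.map pathMonomial).sum) : V = W := by
  have hs : ∀ k, (V.map (fun σ => lpH σ k)).sum = (W.map (fun σ => lpH σ k)).sum := fun k => by
    rw [← lpS_sum, ← lpS_sum, h]
  have hc : V.card = W.card := by
    have := hs n
    rw [sum_top hV n le_rfl, sum_top hW n le_rfl] at this
    exact Nat.eq_of_mul_eq_mul_right hr this
  obtain ⟨g, hg, g1, g2, g3⟩ := thin_list hV hTV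
  obtain ⟨g', hg', g1', g2', g3'⟩ := thin_list hW hTW
  have hs' : ∀ k, ∑ i, lpH (g i) k = ∑ i, lpH (g' i) k := by
    intro k
    have := hs k
    conv_lhs at this => rw [hg]
    conv_rhs at this => rw [hg']
    rw [Multiset.map_map, Multiset.map_map] at this
    exact this
  rw [hg, hg']
  clear hg hg' h hs
  generalize V.card = a at *
  generalize W.card = b at *
  subst hc
  congr 1
  funext i
  exact lpH_inj (g1 i) (g1' i) fun k => le_antisymm
    (thin_fun_le _ _ _ (g2' k) (g2 k) (g3' k) (g3 k) (hs' k).symm i)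
    (thin_fun_le _ _ _ (g2 k) (g2' k) (g3 k) (g3' k) (hs' k) i)

lemma thin_exists {n r : ℕ} {α ω : Finset ℕ} (hα : IsLatticePath n r α)
    (hω : IsLatticePath n r ω) {V : Multiset (Finset ℕ)}
    (hV : ∀ σ ∈ V, IsLatticePath n r σ ∧ PathAbove α σ ∧ PathAbove σ ω) :
    ∃ W : Multiset (Finset ℕ),
      (∀ σ ∈ W, IsLatticePath n r σ ∧ PathAbove α σ ∧ PathAbove σ ω) ∧
      (W.map pathMonomial).sum = (V.map pathMonomial).sum ∧ ThinV n r W := by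
  rcases Nat.eq_zero_or_pos V.card with h0 | ht
  · refine ⟨V, hV, rfl, ?_⟩
    rw [Multiset.card_eq_zero] at h0
    subst h0
    simp [ThinV]
  set t := V.card with htdef
  let S : ℕ → ℕ := fun k => (V.map (fun σ => lpH σ k)).sum
  have hS : Monotone S := fun a b hab =>
    Multiset.sum_map_le_sum_map _ _ (fun σ _ => lpH_mono σ hab)
  have hSα : ∀ k, S k ≤ t * lpH α k := by
    intro k
    have := Multiset.sum_map_le_sum_map (s := V) (fun σ => lpH σ k) (fun _ => lpH α k)
      (fun σ hσ => (pathAbove_iff hα (hV σ hσ).1).1 (hV σ hσ).2.1 k)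
    simpa using this
  have hSω : ∀ k, t * lpH ω k ≤ S k := by
    intro k
    have := Multiset.sum_map_le_sum_map (s := V) (fun _ => lpH ω k) (fun σ => lpH σ k)
      (fun σ hσ => (pathAbove_iff (hV σ hσ).1 hω).1 (hV σ hσ).2.2 k)
    simpa using this
  have hdiv : ∀ a j, j < t → (t * a + j) / t = a := by
    intro a j hj
    rw [Nat.mul_add_div ht, Nat.div_eq_of_lt hj, add_zero]
  have hex : ∀ j, ∃ σ, j < t → IsLatticePath n r σ ∧ ∀ k, lpH σ k = (S k + j) / t := by
    intro j
    by_cases hj : j < t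
    · obtain ⟨σ, h⟩ := exists_path n r (fun k => (S k + j) / t)
        (fun a b hab => Nat.div_le_div_right (by have := hS hab; omega))
        (fun k hk => by
          have := sum_top (fun σ hσ => (hV σ hσ).1) k hk
          change S k = t * r at this
          simp only [this]
          exact hdiv r j hj)
      exact ⟨σ, fun _ => h⟩
    · exact ⟨∅, fun h => absurd h hj⟩
  choose p hp using hex
  have hmem : ∀ σ ∈ (Multiset.range t).map p, ∃ j < t, p j = σ := by
    intro σ hσ
    simpa using hσ
  refine ⟨(Multiset.range t).map p, ?_, ?_, ?_, ?_⟩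
  · intro σ hσ
    obtain ⟨j, hj, rfl⟩ := hmem σ hσ
    refine ⟨(hp j hj).1, (pathAbove_iff hα (hp j hj).1).2 fun k => ?_,
      (pathAbove_iff (hp j hj).1 hω).2 fun k => ?_⟩
    · rw [(hp j hj).2, ← hdiv (lpH α k) j hj]
      exact Nat.div_le_div_right (by have := hSα k; omega)
    · rw [(hp j hj).2, ← hdiv (lpH ω k) j hj]
      exact Nat.div_le_div_right (by have := hSω k; omega)
  · apply lpS_ext
    intro k
    rw [lpS_sum, lpS_sum, Multiset.map_map]
    change ∑ j ∈ Finset.range t, lpH (p j) k = S k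
    rw [Finset.sum_congr rfl (fun j hj => (hp j (Finset.mem_range.1 hj)).2 k), hermite t ht]
  · intro σ hσ τ hτ
    obtain ⟨i, hi, rfl⟩ := hmem σ hσ
    obtain ⟨j, hj, rfl⟩ := hmem τ hτ
    rw [pathAbove_iff (hp i hi).1 (hp j hj).1, pathAbove_iff (hp j hj).1 (hp i hi).1]
    simp only [(hp i hi).2, (hp j hj).2]
    rcases le_total i j with h | h
    · right; intro k; exact Nat.div_le_div_right (by omega)
    · left; intro k; exact Nat.div_le_div_right (by omega)
  · intro σ hσ τ hτ k hk
    obtain ⟨i, hi, rfl⟩ := hmem σ hσ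
    obtain ⟨j, hj, rfl⟩ := hmem τ hτ
    rw [eastHeight_eq (hp i hi).1 k hk, eastHeight_eq (hp j hj).1 k hk, (hp i hi).2, (hp j hj).2,
      ← Nat.add_div_right _ ht]
    exact Nat.div_le_div_right (by omega)

/-- If the symmetric exchange graph `G(μ)` of the lattice path polymatroid
`Γ(α,ω)` is nonempty, it has exactly one thin vertex. -/
theorem stmt7 (n r : ℕ) (hn : 0 < n) (hr : 0 < r) (α ω : Finset ℕ)
    (hα : IsLatticePath n r α) (hω : IsLatticePath n r ω) (hαω : PathAbove α ω)
    (μ : ℕ →₀ ℕ)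
    (hne : ∃ V : Multiset (Finset ℕ),
      (∀ σ ∈ V, IsLatticePath n r σ ∧ PathAbove α σ ∧ PathAbove σ ω) ∧
      (V.map pathMonomial).sum = μ) :
    ∃! V : Multiset (Finset ℕ),
      (∀ σ ∈ V, IsLatticePath n r σ ∧ PathAbove α σ ∧ PathAbove σ ω) ∧
      (V.map pathMonomial).sum = μ ∧ ThinV n r V := by
  obtain ⟨V, hV, rfl⟩ := hne
  obtain ⟨W, h1, h2, h3⟩ := thin_exists hα hω hV
  refine ⟨W, ⟨h1, h2, h3⟩, ?_⟩
  rintro U ⟨u1, u2, u3⟩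
  exact thin_unique hr (fun σ h => (u1 σ h).1) u3 (fun σ h => (h1 σ h).1) h3 (u2.trans h2.symm)
end

section
/- Let α ⪰ ω be lattice paths from (0,0) to (n,r) and let M(α,ω) be the associated lattice path matroid. Then the toric ideal of M(α,ω) (the kernel of the toric map φ) is generated by the symmetric exchange binomials of M(α,ω). -/
/-- The bases of the lattice path matroid `M(α, ω)`: the sets `N(σ)` for
lattice paths `σ` with `α ⪰ σ ⪰ ω`. -/
def IsLPMBasis (n r : ℕ) (α ω : Finset ℕ) (B : Finset ℕ) : Prop :=
  IsLatticePath n r B ∧ PathAbove α B ∧ PathAbove B ω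

/-- `C, C'` are obtained from bases `B, B'` by a symmetric exchange, relative
to a basis predicate `P`. -/
def SymExchM (P : Finset ℕ → Prop) (B B' C C' : Finset ℕ) : Prop :=
  P B ∧ P B' ∧ ∃ i j,
    i ∈ B ∧ i ∉ B' ∧ j ∈ B' ∧ j ∉ B ∧
    C = insert j (B.erase i) ∧ C' = insert i (B'.erase j) ∧
    P C ∧ P C'

/-- The toric map of a matroid with bases `P`: sends `Y_B` to `∏_{i ∈ B} x_i`. -/
noncomputable def toricMapM (P : Finset ℕ → Prop) :
    MvPolynomial {B : Finset ℕ // P B} ℂ →ₐ[ℂ] MvPolynomial ℕ ℂ :=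
  MvPolynomial.aeval fun B => ∏ i ∈ B.1, MvPolynomial.X i

/-- The set of symmetric exchange binomials of a matroid with bases `P`. -/
def SEBM (P : Finset ℕ → Prop) : Set (MvPolynomial {B : Finset ℕ // P B} ℂ) :=
  { p | ∃ B B' C C' : {B : Finset ℕ // P B},
      SymExchM P B.1 B'.1 C.1 C'.1 ∧
      p = MvPolynomial.X B * MvPolynomial.X B' - MvPolynomial.X C * MvPolynomial.X C' }

/-- prefix counting function -/
def pc (B : Finset ℕ) (k : ℕ) : ℕ := B.val.countP (· ≤ k)

lemma sorted_get_le (x : ℕ) : ∀ (l : List ℕ), l.Pairwise (· ≤ ·) → ∀ k (h : k < l.length),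
    (l.get ⟨k, h⟩ ≤ x ↔ k < l.countP (· ≤ x)) := by
  intro l
  induction l with
  | nil => intro _ k h; simp at h
  | cons a t ih =>
    intro hl k h
    rw [List.pairwise_cons] at hl
    by_cases ha : a ≤ x
    · rw [List.countP_cons_of_pos (by simpa using ha)]
      cases k with
      | zero => simpa using ha
      | succ k =>
        have := ih hl.2 k (by simpa using h)
        simp only [List.get_eq_getElem, List.getElem_cons_succ] at this ⊢
        rw [this]; omega
    · rw [List.countP_cons_of_neg (by simpa using ha)]
      have h0 : t.countP (· ≤ x) = 0 := by
        rw [List.countP_eq_zero]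
        intro b hb
        have := hl.1 b hb
        simp; omega
      rw [h0]
      cases k with
      | zero => simpa using ha
      | succ k =>
        have := hl.1 (t[k]'(by simpa using h)) (List.getElem_mem _)
        simp only [List.get_eq_getElem, List.getElem_cons_succ]
        omega

lemma sort_get_le (B : Finset ℕ) (x k : ℕ) (h : k < (B.sort (· ≤ ·)).length) :
    (B.sort (· ≤ ·)).get ⟨k, h⟩ ≤ x ↔ k < pc B x := by
  rw [sorted_get_le x _ (Finset.pairwise_sort B (· ≤ ·)) k h, pc]
  conv_rhs => rw [← Finset.sort_eq B (· ≤ ·)]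
  rw [Multiset.coe_countP]

lemma pc_le_card (B : Finset ℕ) (x : ℕ) : pc B x ≤ B.card := Multiset.countP_le_card _ _

lemma pathAbove_iff_s8 {σ τ : Finset ℕ} (h : σ.card = τ.card) :
    PathAbove σ τ ↔ ∀ x, pc τ x ≤ pc σ x := by
  constructor
  · intro H x
    by_contra hc
    push Not at hc
    have h3 := pc_le_card τ x
    have h1 : pc σ x < (σ.sort (· ≤ ·)).length := by rw [Finset.length_sort]; omega
    have h2 : pc σ x < (τ.sort (· ≤ ·)).length := by rw [Finset.length_sort]; omega
    have := H _ h1 h2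
    have h4 := (sort_get_le τ x _ h2).2 hc
    have h5 := (sort_get_le σ x _ h1).1 (this.trans h4)
    omega
  · intro H k h1 h2
    rw [sort_get_le]
    exact lt_of_lt_of_le ((sort_get_le τ _ k h2).1 le_rfl) (H _)

lemma basis_iff_s8 {n r : ℕ} {α ω B : Finset ℕ} (hα : IsLatticePath n r α)
    (hω : IsLatticePath n r ω) :
    IsLPMBasis n r α ω B ↔ (B ⊆ Finset.Icc 1 (n + r) ∧ B.card = r ∧
      ∀ k, pc ω k ≤ pc B k ∧ pc B k ≤ pc α k) := by
  unfold IsLPMBasis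
  constructor
  · rintro ⟨⟨h1, h2⟩, h3, h4⟩
    rw [pathAbove_iff_s8 (by rw [h2, hα.2])] at h3
    rw [pathAbove_iff_s8 (by rw [h2, hω.2])] at h4
    exact ⟨h1, h2, fun k => ⟨h4 k, h3 k⟩⟩
  · rintro ⟨h1, h2, h3⟩
    rw [pathAbove_iff_s8 (by rw [h2, hα.2]), pathAbove_iff_s8 (by rw [h2, hω.2])]
    exact ⟨⟨h1, h2⟩, fun k => (h3 k).2, fun k => (h3 k).1⟩

lemma pc_eq_card (B : Finset ℕ) (k : ℕ) : pc B k = (B.filter (· ≤ k)).card := by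
  rw [pc, Multiset.countP_eq_card_filter]; rfl

lemma pc_zero {N : ℕ} {B : Finset ℕ} (h : B ⊆ Finset.Icc 1 N) : pc B 0 = 0 := by
  rw [pc_eq_card, Finset.card_eq_zero, Finset.filter_eq_empty_iff]
  intro x hx
  have := Finset.mem_Icc.1 (h hx)
  omega

lemma pc_top {N : ℕ} {B : Finset ℕ} (h : B ⊆ Finset.Icc 1 N) {k : ℕ} (hk : N ≤ k) :
    pc B k = B.card := by
  rw [pc_eq_card, Finset.filter_true_of_mem]
  intro x hx
  have := Finset.mem_Icc.1 (h hx)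
  omega

lemma pc_succ (B : Finset ℕ) (k : ℕ) :
    pc B (k + 1) = pc B k + if k + 1 ∈ B then 1 else 0 := by
  rw [pc_eq_card, pc_eq_card]
  split_ifs with h
  · have : B.filter (· ≤ k + 1) = insert (k + 1) (B.filter (· ≤ k)) := by
      ext x; simp only [Finset.mem_filter, Finset.mem_insert]
      constructor
      · rintro ⟨a, b⟩
        by_cases hx : x = k + 1
        · exact Or.inl hx
        · exact Or.inr ⟨a, by omega⟩
      · rintro (rfl | ⟨a, b⟩)
        · exact ⟨h, le_rfl⟩
        · exact ⟨a, by omega⟩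
    rw [this, Finset.card_insert_of_notMem (by simp)]
  · congr 1
    ext x; simp only [Finset.mem_filter]
    constructor
    · rintro ⟨a, b⟩
      have : x ≠ k + 1 := by rintro rfl; exact h a
      exact ⟨a, by omega⟩
    · rintro ⟨a, b⟩; exact ⟨a, by omega⟩

lemma pc_insert_erase {B : Finset ℕ} {i j : ℕ} (hi : i ∈ B) (hj : j ∉ B) (k : ℕ) :
    pc (insert j (B.erase i)) k + (if i ≤ k then 1 else 0) =
      pc B k + (if j ≤ k then 1 else 0) := by
  have h1 : ∀ (A : Finset ℕ) a, a ∉ A → pc (insert a A) k = pc A k + if a ≤ k then 1 else 0 := by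
    intro A a ha
    rw [pc, Finset.insert_val_of_notMem ha, Multiset.countP_cons]; rfl
  have h2 := h1 (B.erase i) i (by simp)
  rw [Finset.insert_erase hi] at h2
  rw [h1 _ _ (by simp [hj]), h2]
  omega

lemma pc_inj {N : ℕ} {B C : Finset ℕ} (hB : B ⊆ Finset.Icc 1 N) (hC : C ⊆ Finset.Icc 1 N)
    (h : ∀ k, pc B k = pc C k) : B = C := by
  ext x
  cases x with
  | zero =>
    constructor
    · intro hx; have := Finset.mem_Icc.1 (hB hx); omega
    · intro hx; have := Finset.mem_Icc.1 (hC hx); omega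
  | succ x =>
    have h1 := pc_succ B x
    have h2 := pc_succ C x
    rw [h, h] at h1
    split_ifs at h1 h2 <;> first | omega | tauto

lemma find_swap {N : ℕ} {B C : Finset ℕ} (hB : B ⊆ Finset.Icc 1 N) (hC : C ⊆ Finset.Icc 1 N)
    (hcard : B.card = C.card) (t : ℕ) (ht : 1 ≤ t) (k : ℕ) (hk : pc C k + t ≤ pc B k) :
    ∃ i j, i ∈ B ∧ i ∉ C ∧ j ∈ C ∧ j ∉ B ∧ i ≤ k ∧ k < j ∧
      ∀ l, i ≤ l → l < j → pc C l + t ≤ pc B l := by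
  have e1 : ∃ i, i ≤ k ∧ ∀ l, i ≤ l → l ≤ k → pc C l + t ≤ pc B l :=
    ⟨k, le_rfl, fun l h1 h2 => by rw [le_antisymm h2 h1]; exact hk⟩
  have e2 : ∃ j, k ≤ j ∧ pc B j < pc C j + t :=
    ⟨max k N, le_max_left _ _, by
      rw [pc_top hB (le_max_right _ _), pc_top hC (le_max_right _ _)]; omega⟩
  classical
  obtain ⟨hi1, hi2⟩ := Nat.find_spec e1
  have hi3 := fun m => @Nat.find_min _ _ e1 m
  obtain ⟨hj1, hj2⟩ := Nat.find_spec e2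
  have hj3 := fun m => @Nat.find_min _ _ e2 m
  generalize Nat.find e1 = i at *
  generalize Nat.find e2 = j at *
  have hkj : k ≠ j := by rintro rfl; omega
  obtain ⟨i', rfl⟩ : ∃ i', i = i' + 1 := by
    cases i with
    | zero =>
      have := hi2 0 le_rfl (by omega)
      rw [pc_zero hB] at this; omega
    | succ i => exact ⟨i, rfl⟩
  obtain ⟨j', rfl⟩ : ∃ j', j = j' + 1 := ⟨j - 1, by omega⟩
  have hlow : pc B i' < pc C i' + t := by
    by_contra hc
    apply hi3 i' (by omega)
    refine ⟨by omega, fun l h1 h2 => ?_⟩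
    by_cases hl : l = i'
    · subst hl; omega
    · exact hi2 l (by omega) h2
  have hmid : ∀ l, i' + 1 ≤ l → l < j' + 1 → pc C l + t ≤ pc B l := by
    intro l h1 h2
    by_cases hl : l ≤ k
    · exact hi2 l h1 hl
    · have := hj3 l h2
      by_contra hc
      exact this ⟨by omega, by omega⟩
  have a1 := pc_succ B i'
  have a2 := pc_succ C i'
  have a3 := pc_succ B j'
  have a4 := pc_succ C j'
  have a5 := hmid (i' + 1) le_rfl (by omega)
  have a6 := hmid j' (by omega) (by omega)
  refine ⟨i' + 1, j' + 1, ?_, ?_, ?_, ?_, hi1, by omega, hmid⟩ <;> by_contra hc <;>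
    simp only [hc, if_true, if_false] at a1 a2 a3 a4 <;> split_ifs at * <;> omega

lemma swap_basis {n r : ℕ} {α ω : Finset ℕ} (hα : IsLatticePath n r α)
    (hω : IsLatticePath n r ω) {B C : Finset ℕ} (hB : IsLPMBasis n r α ω B)
    (hC : IsLPMBasis n r α ω C) (t : ℕ) (ht : 1 ≤ t) (k : ℕ) (hk : pc C k + t ≤ pc B k) :
    ∃ B' C', SymExchM (IsLPMBasis n r α ω) B C B' C' ∧ k ≤ n + r ∧
      (∀ l, (pc B' l = pc B l ∧ pc C' l = pc C l ∧ l ≠ k) ∨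
        (pc C l + t ≤ pc B l ∧ pc B' l + 1 = pc B l ∧ pc C' l = pc C l + 1)) := by
  have hB' := (basis_iff_s8 hα hω).1 hB
  have hC' := (basis_iff_s8 hα hω).1 hC
  obtain ⟨i, j, h1, h2, h3, h4, h5, h6, h7⟩ :=
    find_swap hB'.1 hC'.1 (by rw [hB'.2.1, hC'.2.1]) t ht k hk
  have key : ∀ l, (pc (insert j (B.erase i)) l = pc B l ∧ pc (insert i (C.erase j)) l = pc C l
        ∧ l ≠ k) ∨
        (pc C l + t ≤ pc B l ∧ pc (insert j (B.erase i)) l + 1 = pc B l ∧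
          pc (insert i (C.erase j)) l = pc C l + 1) := by
    intro l
    have b1 := pc_insert_erase h1 h4 l
    have b2 := pc_insert_erase h3 h2 l
    have b3 := h7 l
    split_ifs at b1 b2 with c1 c2 <;> omega
  refine ⟨_, _, ⟨hB, hC, i, j, h1, h2, h3, h4, rfl, rfl, ?_, ?_⟩, ?_, key⟩
  · rw [basis_iff_s8 hα hω]
    refine ⟨?_, ?_, fun l => ?_⟩
    · intro x hx
      rcases Finset.mem_insert.1 hx with rfl | hx
      · exact hC'.1 h3
      · exact hB'.1 (Finset.mem_of_mem_erase hx)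
    · rw [Finset.card_insert_of_notMem (by simp [h4]), Finset.card_erase_add_one h1, hB'.2.1]
    · have := hB'.2.2 l
      have := hC'.2.2 l
      have := key l
      omega
  · rw [basis_iff_s8 hα hω]
    refine ⟨?_, ?_, fun l => ?_⟩
    · intro x hx
      rcases Finset.mem_insert.1 hx with rfl | hx
      · exact hB'.1 h1
      · exact hC'.1 (Finset.mem_of_mem_erase hx)
    · rw [Finset.card_insert_of_notMem (by simp [h2]), Finset.card_erase_add_one h3, hC'.2.1]
    · have := hB'.2.2 l
      have := hC'.2.2 l
      have := key l
      omega
  · have := Finset.mem_Icc.1 (hC'.1 h3)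
    omega

/-- monomial of a multiset of bases -/
noncomputable def ym {P : Finset ℕ → Prop} (M : Multiset {B : Finset ℕ // P B}) :
    MvPolynomial {B : Finset ℕ // P B} ℂ := (M.map MvPolynomial.X).prod

/-- multiset union -/
def mu {P : Finset ℕ → Prop} (M : Multiset {B : Finset ℕ // P B}) : Multiset ℕ :=
  M.bind fun B => B.1.val

lemma prod_X_eq {σ : Type*} [DecidableEq σ] (M : Multiset σ) :
    (M.map (MvPolynomial.X (R := ℂ))).prod = MvPolynomial.monomial (Multiset.toFinsupp M) 1 := by
  induction M using Multiset.induction with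
  | empty => simp
  | cons a s ih =>
    rw [Multiset.map_cons, Multiset.prod_cons, ih, MvPolynomial.X, MvPolynomial.monomial_mul,
      ← Multiset.singleton_add, Multiset.toFinsupp_add, Multiset.toFinsupp_singleton, one_mul]

lemma toric_ym {P : Finset ℕ → Prop} (M : Multiset {B : Finset ℕ // P B}) :
    toricMapM P (ym M) = MvPolynomial.monomial (Multiset.toFinsupp (mu M)) 1 := by
  rw [← prod_X_eq, mu, Multiset.map_bind, Multiset.prod_bind, ym, map_multiset_prod,
    Multiset.map_map]
  congr 1
  apply Multiset.map_congr rfl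
  intro B _
  simp [toricMapM]

lemma span_le_ker (P : Finset ℕ → Prop) : Ideal.span (SEBM P) ≤ RingHom.ker (toricMapM P) := by
  rw [Ideal.span_le]
  rintro p ⟨B, B', C, C', ⟨_, _, i, j, h1, h2, h3, h4, h5, h6, _, _⟩, rfl⟩
  rw [SetLike.mem_coe, RingHom.mem_ker, map_sub, map_mul, map_mul, sub_eq_zero]
  simp only [toricMapM, MvPolynomial.aeval_X]
  rw [h5, h6, Finset.prod_insert (by simp [h4]), Finset.prod_insert (by simp [h2]),
    ← Finset.mul_prod_erase _ _ h1, ← Finset.mul_prod_erase _ _ h3]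
  ring

lemma mu_eq_of_mem {P : Finset ℕ → Prop} {M M' : Multiset {B : Finset ℕ // P B}}
    (h : ym M - ym M' ∈ Ideal.span (SEBM P)) : mu M = mu M' := by
  have := span_le_ker P h
  rw [RingHom.mem_ker, map_sub, sub_eq_zero, toric_ym, toric_ym] at this
  have := MvPolynomial.monomial_left_injective (one_ne_zero) this
  exact Multiset.toFinsupp.injective this

/-- potential -/
def pot {P : Finset ℕ → Prop} (N : ℕ) (B : {B : Finset ℕ // P B})
    (s : Multiset {B : Finset ℕ // P B}) : ℕ :=
  ∑ k ∈ Finset.range (N + 1), pc B.1 k * (pc B.1 k - 1) +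
    (s.map fun C => ∑ k ∈ Finset.range (N + 1), pc C.1 k * pc C.1 k).sum

lemma pot_lt_aux {P : Finset ℕ → Prop} (N : ℕ) (B B' C C' : {B : Finset ℕ // P B})
    (s : Multiset {B : Finset ℕ // P B}) (k : ℕ) (hk : k ≤ N)
    (h : ∀ l, (pc B'.1 l = pc B.1 l ∧ pc C'.1 l = pc C.1 l ∧ l ≠ k) ∨
      pc B'.1 l * (pc B'.1 l - 1) + pc C'.1 l * pc C'.1 l <
      pc B.1 l * (pc B.1 l - 1) + pc C.1 l * pc C.1 l) :
    pot N B' (C' ::ₘ s) < pot N B (C ::ₘ s) := by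
  unfold pot
  rw [Multiset.map_cons, Multiset.map_cons, Multiset.sum_cons, Multiset.sum_cons, ← add_assoc,
    ← add_assoc, ← Finset.sum_add_distrib, ← Finset.sum_add_distrib]
  apply Nat.add_lt_add_right
  apply Finset.sum_lt_sum
  · intro l _
    rcases h l with ⟨h1, h2, _⟩ | h
    · rw [h1, h2]
    · exact h.le
  · refine ⟨k, Finset.mem_range.2 (by omega), ?_⟩
    rcases h k with ⟨_, _, h3⟩ | h
    · exact absurd rfl h3
    · exact h

lemma arith_a (a b a' b' : ℕ) (h : b + 2 ≤ a) (h1 : a' + 1 = a) (h2 : b' = b + 1) :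
    a' * (a' - 1) + b' * b' < a * (a - 1) + b * b := by
  obtain ⟨c, rfl⟩ : ∃ c, a = b + 2 + c := ⟨a - b - 2, by omega⟩
  obtain rfl : a' = b + 1 + c := by omega
  subst h2
  have e1 : b + 1 + c - 1 = b + c := by omega
  have e2 : b + 2 + c - 1 = b + 1 + c := by omega
  rw [e1, e2]
  nlinarith

lemma arith_b (a b a' b' : ℕ) (h : a + 1 ≤ b) (h1 : b' + 1 = b) (h2 : a' = a + 1) :
    a' * (a' - 1) + b' * b' < a * (a - 1) + b * b := by
  obtain ⟨c, rfl⟩ : ∃ c, b = a + 1 + c := ⟨b - a - 1, by omega⟩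
  obtain rfl : b' = a + c := by omega
  subst h2
  rw [Nat.add_sub_cancel]
  cases a with
  | zero => simp; nlinarith
  | succ a => rw [Nat.add_sub_cancel]; nlinarith

lemma normalize_pair {n r : ℕ} {α ω : Finset ℕ} (hα : IsLatticePath n r α)
    (hω : IsLatticePath n r ω) (d : ℕ) : ∀ (B : {B : Finset ℕ // IsLPMBasis n r α ω B})
    (s : Multiset {B : Finset ℕ // IsLPMBasis n r α ω B}), pot (n + r) B s = d →
    ∃ B' s', Multiset.card s' = Multiset.card s ∧
      ym (B ::ₘ s) - ym (B' ::ₘ s') ∈ Ideal.span (SEBM (IsLPMBasis n r α ω)) ∧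
      ∀ C ∈ s', ∀ k, pc C.1 k ≤ pc B'.1 k ∧ pc B'.1 k ≤ pc C.1 k + 1 := by
  induction d using Nat.strong_induction_on with
  | _ d ih =>
  intro B s hd
  by_cases hgood : ∀ C ∈ s, ∀ k, pc C.1 k ≤ pc B.1 k ∧ pc B.1 k ≤ pc C.1 k + 1
  · exact ⟨B, s, rfl, by simp, hgood⟩
  push Not at hgood
  obtain ⟨C, hC, k, hk⟩ := hgood
  obtain ⟨s, rfl⟩ := Multiset.exists_cons_of_mem hC
  have step : ∃ B' C' : {B : Finset ℕ // IsLPMBasis n r α ω B},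
      MvPolynomial.X B * MvPolynomial.X C - MvPolynomial.X B' * MvPolynomial.X C' ∈
        Ideal.span (SEBM (IsLPMBasis n r α ω)) ∧
      pot (n + r) B' (C' ::ₘ s) < pot (n + r) B (C ::ₘ s) := by
    by_cases hle : pc C.1 k ≤ pc B.1 k
    · obtain ⟨B', C', h1, h2, h3⟩ := swap_basis hα hω B.2 C.2 2 (by omega) k (by
        have := hk hle; omega)
      obtain ⟨_, _, i, j, _, _, _, _, _, _, p1, p2⟩ := id h1
      refine ⟨⟨B', p1⟩, ⟨C', p2⟩, Ideal.subset_span ⟨B, C, ⟨B', p1⟩, ⟨C', p2⟩, h1, rfl⟩, ?_⟩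
      refine pot_lt_aux _ _ _ _ _ _ k h2 fun l => ?_
      rcases h3 l with h | ⟨ha, hb, hc⟩
      · exact Or.inl h
      · exact Or.inr (arith_a _ _ _ _ ha hb hc)
    · obtain ⟨C', B', h1, h2, h3⟩ := swap_basis hα hω C.2 B.2 1 (by omega) k (by omega)
      obtain ⟨_, _, i, j, _, _, _, _, _, _, p1, p2⟩ := id h1
      refine ⟨⟨B', p2⟩, ⟨C', p1⟩, Ideal.subset_span ⟨C, B, ⟨C', p1⟩, ⟨B', p2⟩, h1, by ring⟩, ?_⟩
      refine pot_lt_aux _ _ _ _ _ _ k h2 fun l => ?_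
      rcases h3 l with ⟨ha, hb, hc⟩ | ⟨ha, hb, hc⟩
      · exact Or.inl ⟨hb, ha, hc⟩
      · exact Or.inr (arith_b _ _ _ _ ha hb hc)
  obtain ⟨B', C', hI, hlt⟩ := step
  obtain ⟨B₂, s₂, c1, c2, c3⟩ := ih _ (hd ▸ hlt) B' (C' ::ₘ s) rfl
  refine ⟨B₂, s₂, by simpa using c1, ?_, c3⟩
  have : ym (B ::ₘ C ::ₘ s) - ym (B₂ ::ₘ s₂) =
      ym s * (MvPolynomial.X B * MvPolynomial.X C - MvPolynomial.X B' * MvPolynomial.X C') +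
      (ym (B' ::ₘ C' ::ₘ s) - ym (B₂ ::ₘ s₂)) := by
    simp only [ym, Multiset.map_cons, Multiset.prod_cons]
    ring
  rw [this]
  exact Ideal.add_mem _ (Ideal.mul_mem_left _ _ hI) c2

lemma countP_mu {P : Finset ℕ → Prop} (k : ℕ) (M : Multiset {B : Finset ℕ // P B}) :
    (mu M).countP (· ≤ k) = (M.map fun C => pc C.1 k).sum := by
  induction M using Multiset.induction with
  | empty => simp [mu]
  | cons a s ih =>
    rw [mu, Multiset.cons_bind, Multiset.countP_add, Multiset.map_cons, Multiset.sum_cons, ← ih]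
    rfl

lemma sum_bounds_s8 {P : Finset ℕ → Prop} (k b : ℕ) (s : Multiset {B : Finset ℕ // P B})
    (h : ∀ C ∈ s, pc C.1 k ≤ b ∧ b ≤ pc C.1 k + 1) :
    (s.map fun C => pc C.1 k).sum ≤ Multiset.card s * b ∧
    Multiset.card s * b ≤ (s.map fun C => pc C.1 k).sum + Multiset.card s := by
  induction s using Multiset.induction with
  | empty => simp
  | cons a s ih =>
    have h1 := ih fun C hC => h C (Multiset.mem_cons_of_mem hC)
    have h2 := h a (Multiset.mem_cons_self _ _)
    rw [Multiset.map_cons, Multiset.sum_cons, Multiset.card_cons, add_mul, one_mul]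
    omega

lemma top_le {P : Finset ℕ → Prop} (B B' : {B : Finset ℕ // P B})
    (s s' : Multiset {B : Finset ℕ // P B}) (hc : Multiset.card s = Multiset.card s')
    (hmu : mu (B ::ₘ s) = mu (B' ::ₘ s'))
    (h : ∀ C ∈ s, ∀ k, pc C.1 k ≤ pc B.1 k ∧ pc B.1 k ≤ pc C.1 k + 1)
    (h' : ∀ C ∈ s', ∀ k, pc C.1 k ≤ pc B'.1 k ∧ pc B'.1 k ≤ pc C.1 k + 1) (k : ℕ) :
    pc B.1 k ≤ pc B'.1 k := by
  have e1 := countP_mu k (B ::ₘ s)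
  rw [hmu, countP_mu, Multiset.map_cons, Multiset.map_cons, Multiset.sum_cons,
    Multiset.sum_cons] at e1
  have b1 := sum_bounds_s8 k _ s fun C hC => h C hC k
  have b2 := sum_bounds_s8 k _ s' fun C hC => h' C hC k
  rw [hc] at b1
  by_contra hlt
  push Not at hlt
  have : Multiset.card s' * (pc B'.1 k + 1) ≤ Multiset.card s' * pc B.1 k :=
    Nat.mul_le_mul_left _ hlt
  rw [mul_add, mul_one] at this
  omega

lemma connected {n r : ℕ} {α ω : Finset ℕ} (hα : IsLatticePath n r α)
    (hω : IsLatticePath n r ω) (d : ℕ) :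
    ∀ (M M' : Multiset {B : Finset ℕ // IsLPMBasis n r α ω B}), Multiset.card M = d →
      Multiset.card M' = d → mu M = mu M' →
      ym M - ym M' ∈ Ideal.span (SEBM (IsLPMBasis n r α ω)) := by
  induction d with
  | zero =>
    intro M M' h1 h2 _
    rw [Multiset.card_eq_zero] at h1 h2
    simp [h1, h2]
  | succ d ih =>
    intro M M' h1 h2 hmu
    obtain ⟨B, s, rfl⟩ := Multiset.card_pos_iff_exists_mem.1 (by omega : 0 < Multiset.card M)
      |>.imp fun _ h => Multiset.exists_cons_of_mem h
    obtain ⟨B', s', rfl⟩ := Multiset.card_pos_iff_exists_mem.1 (by omega : 0 < Multiset.card M')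
      |>.imp fun _ h => Multiset.exists_cons_of_mem h
    rw [Multiset.card_cons] at h1 h2
    obtain ⟨T, t, a1, a2, a3⟩ := normalize_pair hα hω _ B s rfl
    obtain ⟨T', t', b1, b2, b3⟩ := normalize_pair hα hω _ B' s' rfl
    have hmu2 : mu (T ::ₘ t) = mu (T' ::ₘ t') := by
      rw [← mu_eq_of_mem a2, ← mu_eq_of_mem b2, hmu]
    have hT : T = T' := by
      apply Subtype.ext
      apply pc_inj T.2.1.1 T'.2.1.1
      intro k
      exact le_antisymm (top_le T T' t t' (by omega) hmu2 a3 b3 k)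
        (top_le T' T t' t (by omega) hmu2.symm b3 a3 k)
    subst hT
    have hmu3 : mu t = mu t' := by
      rw [mu, mu, Multiset.cons_bind, Multiset.cons_bind] at hmu2
      exact add_left_cancel hmu2
    have := ih t t' (by omega) (by omega) hmu3
    have e : ym (B ::ₘ s) - ym (B' ::ₘ s') = (ym (B ::ₘ s) - ym (T ::ₘ t)) +
        MvPolynomial.X T * (ym t - ym t') - (ym (B' ::ₘ s') - ym (T ::ₘ t')) := by
      simp only [ym, Multiset.map_cons, Multiset.prod_cons]
      ring
    rw [e]
    exact Ideal.sub_mem _ (Ideal.add_mem _ a2 (Ideal.mul_mem_left _ _ this)) b2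

lemma card_mu {n r : ℕ} {α ω : Finset ℕ}
    (M : Multiset {B : Finset ℕ // IsLPMBasis n r α ω B}) :
    Multiset.card (mu M) = Multiset.card M * r := by
  induction M using Multiset.induction with
  | empty => simp [mu]
  | cons a s ih =>
    rw [mu, Multiset.cons_bind, Multiset.card_add, Multiset.card_cons, add_mul, one_mul, ← ih,
      add_comm]
    congr 1
    exact a.2.1.2

/-- The toric ideal of a lattice path matroid is generated by its symmetric
exchange binomials. -/
theorem stmt8 (n r : ℕ) (hn : 0 < n) (hr : 0 < r) (α ω : Finset ℕ)
    (hα : IsLatticePath n r α) (hω : IsLatticePath n r ω) (hαω : PathAbove α ω) :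
    RingHom.ker (toricMapM (IsLPMBasis n r α ω)) =
      Ideal.span (SEBM (IsLPMBasis n r α ω)) := by
  classical
  apply le_antisymm _ (span_le_ker _)
  let rep : (ℕ →₀ ℕ) → Multiset {B : Finset ℕ // IsLPMBasis n r α ω B} := fun e =>
    if h : ∃ M : Multiset {B : Finset ℕ // IsLPMBasis n r α ω B},
      Multiset.toFinsupp (mu M) = e then h.choose else 0
  have hrep : ∀ M : Multiset {B : Finset ℕ // IsLPMBasis n r α ω B},
      mu (rep (Multiset.toFinsupp (mu M))) = mu M := by
    intro M
    have h : ∃ M' : Multiset {B : Finset ℕ // IsLPMBasis n r α ω B},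
      Multiset.toFinsupp (mu M') = Multiset.toFinsupp (mu M) := ⟨M, rfl⟩
    have := h.choose_spec
    simp only [rep, dif_pos h]
    exact Multiset.toFinsupp.injective this
  let ψ : MvPolynomial ℕ ℂ →ₗ[ℂ] MvPolynomial {B : Finset ℕ // IsLPMBasis n r α ω B} ℂ :=
    (MvPolynomial.basisMonomials ℕ ℂ).constr ℂ (fun e => ym (rep e))
  have hψ : ∀ e, ψ (MvPolynomial.monomial e 1) = ym (rep e) := by
    intro e
    have := (MvPolynomial.basisMonomials ℕ ℂ).constr_basis ℂ (fun e => ym (rep e)) e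
    rwa [MvPolynomial.coe_basisMonomials] at this
  have key : ∀ p, p - ψ (toricMapM (IsLPMBasis n r α ω) p) ∈
      Ideal.span (SEBM (IsLPMBasis n r α ω)) := by
    intro p
    induction p using MvPolynomial.induction_on' with
    | monomial u a =>
      have h1 : MvPolynomial.monomial u a = a • ym (Finsupp.toMultiset u) := by
        rw [ym, prod_X_eq, Finsupp.toMultiset_toFinsupp, MvPolynomial.smul_monomial, smul_eq_mul,
          mul_one]
      rw [h1, map_smul, map_smul, ← smul_sub, toric_ym, hψ, MvPolynomial.smul_eq_C_mul]
      apply Ideal.mul_mem_left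
      have h2 := (hrep (Finsupp.toMultiset u)).symm
      refine connected hα hω _ _ _ rfl ?_ h2
      have h3 := congrArg Multiset.card h2
      rw [card_mu, card_mu] at h3
      exact (Nat.eq_of_mul_eq_mul_right hr h3).symm
    | add p q hp hq =>
      rw [map_add, map_add, add_sub_add_comm]
      exact Ideal.add_mem _ hp hq
  intro p hp
  have := key p
  rwa [RingHom.mem_ker.1 hp, map_zero, sub_zero] at this
end

section
/- Let α ⪰ ω be lattice paths from (0,0) to (n,r) and let M(α,ω) be the associated lattice path matroid. Then there exists a monomial order ≻ on the monomials of the base ring of M(α,ω) under which the symmetric exchange binomials form a Gröbner basis of the toric ideal: for every nonzero f in ker φ, the ≻-leading monomial of f is divisible by the ≻-leading monomial of some symmetric exchange binomial. -/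
/-- A monomial order on the monomials (exponent vectors) of a polynomial ring:
a total order with `M ≻ 1` for `M ≠ 1`, compatible with multiplication. -/
def IsMonomialOrder {X : Type*} (succ : (X →₀ ℕ) → (X →₀ ℕ) → Prop) : Prop :=
  (∀ M M', M = M' ∨ succ M M' ∨ succ M' M) ∧
  (∀ M, ¬ succ M M) ∧
  (∀ M M' M'', succ M M' → succ M' M'' → succ M M'') ∧
  (∀ M, M ≠ 0 → succ M 0) ∧
  (∀ M M' N, succ M M' → succ (M + N) (M' + N))

/-- `d` is the `succ`-leading monomial of `f`. -/
def IsLeadMonOf {X : Type*} (succ : (X →₀ ℕ) → (X →₀ ℕ) → Prop)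
    (f : MvPolynomial X ℂ) (d : X →₀ ℕ) : Prop :=
  d ∈ f.support ∧ ∀ d' ∈ f.support, d' ≠ d → succ d d'


namespace LPM

/-- height of the path after `k` steps -/
def ht (B : Finset ℕ) (k : ℕ) : ℕ := (B.filter (· ≤ k)).card

lemma ht_succ (B : Finset ℕ) (k : ℕ) :
    ht B (k+1) = ht B k + if k + 1 ∈ B then 1 else 0 := by
  unfold ht
  split_ifs with hk
  · have : B.filter (· ≤ k+1) = insert (k+1) (B.filter (· ≤ k)) := by
      ext x; simp only [Finset.mem_filter, Finset.mem_insert]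
      constructor
      · rintro ⟨h1, h2⟩
        rcases Nat.lt_or_ge k x with h | h
        · left; omega
        · right; exact ⟨h1, h⟩
      · rintro (rfl | ⟨h1, h2⟩)
        · exact ⟨hk, le_refl _⟩
        · exact ⟨h1, by omega⟩
    rw [this, Finset.card_insert_of_notMem]
    simp
  · congr 1
    ext x; simp only [Finset.mem_filter]
    constructor
    · rintro ⟨h1, h2⟩
      refine ⟨h1, ?_⟩
      by_contra h
      have : x = k+1 := by omega
      exact hk (this ▸ h1)
    · rintro ⟨h1, h2⟩
      exact ⟨h1, by omega⟩

lemma list_lem (l : List ℕ) (hl : l.Pairwise (· < ·)) (k i : ℕ) (hi : i < l.length) :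
    i < (l.filter (· ≤ k)).length ↔ l.get ⟨i, hi⟩ ≤ k := by
  induction l generalizing i with
  | nil => simp at hi
  | cons a t ih =>
    rw [List.pairwise_cons] at hl
    obtain ⟨ha, ht⟩ := hl
    by_cases hak : a ≤ k
    · rw [List.filter_cons_of_pos (by simpa using hak)]
      cases i with
      | zero => simpa using hak
      | succ i =>
        have := ih ht i (by simpa using hi)
        simpa using this
    · rw [List.filter_cons_of_neg (by simpa using hak)]
      have h0 : t.filter (· ≤ k) = [] := by
        rw [List.filter_eq_nil_iff]
        intro b hb
        have := ha b hb
        simp; omega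
      rw [h0]
      cases i with
      | zero => simpa using hak
      | succ i =>
        have hi' : i < t.length := by simpa using hi
        have := ha (t.get ⟨i, hi'⟩) (List.get_mem _ _)
        simp only [List.get_eq_getElem, List.getElem_cons_succ, List.length_nil] at *
        omega

lemma ht_eq (B : Finset ℕ) (k : ℕ) :
    ht B k = ((B.sort (· ≤ ·)).filter (· ≤ k)).length := by
  unfold ht
  have h1 : ((B.sort (· ≤ ·)).filter (· ≤ k)).Nodup := (Finset.sort_nodup _ _).filter _
  rw [← List.toFinset_card_of_nodup h1]
  congr 1
  ext x
  simp

lemma ht_lem (B : Finset ℕ) (k i : ℕ) (hi : i < (B.sort (· ≤ ·)).length) :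
    i < ht B k ↔ (B.sort (· ≤ ·)).get ⟨i, hi⟩ ≤ k := by
  rw [ht_eq]
  exact list_lem _ (Finset.sortedLT_sort B).pairwise k i hi

lemma ht_le_card (B : Finset ℕ) (k : ℕ) : ht B k ≤ B.card := Finset.card_filter_le _ _

lemma above_iff (σ τ : Finset ℕ) (hc : σ.card = τ.card) :
    PathAbove σ τ ↔ ∀ k, ht τ k ≤ ht σ k := by
  constructor
  · intro h k
    by_contra hlt
    push Not at hlt
    have h2 : ht σ k < (τ.sort (· ≤ ·)).length := by
      rw [Finset.length_sort]; exact lt_of_lt_of_le hlt (ht_le_card _ _)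
    have h1 : ht σ k < (σ.sort (· ≤ ·)).length := by
      rw [Finset.length_sort] at *; omega
    have a := h _ h1 h2
    have b := (ht_lem τ k _ h2).1 hlt
    have c := (ht_lem σ k _ h1).2 (a.trans b)
    exact lt_irrefl _ c
  · intro h k h1 h2
    rw [← ht_lem]
    exact lt_of_lt_of_le ((ht_lem τ _ k h2).2 le_rfl) (h _)

lemma ht_zero {n r : ℕ} {B : Finset ℕ} (h : IsLatticePath n r B) : ht B 0 = 0 := by
  unfold ht
  rw [Finset.card_eq_zero, Finset.filter_eq_empty_iff]
  intro x hx
  have := Finset.mem_Icc.1 (h.1 hx)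
  omega

lemma ht_top {n r : ℕ} {B : Finset ℕ} (h : IsLatticePath n r B) : ht B (n+r) = r := by
  unfold ht
  rw [Finset.filter_true_of_mem, h.2]
  intro x hx
  exact (Finset.mem_Icc.1 (h.1 hx)).2

lemma ht_ext {n r : ℕ} {B C : Finset ℕ} (hB : IsLatticePath n r B) (hC : IsLatticePath n r C)
    (h : ∀ k, ht B k = ht C k) : B = C := by
  ext x
  cases x with
  | zero =>
    constructor
    · intro hx; have := Finset.mem_Icc.1 (hB.1 hx); omega
    · intro hx; have := Finset.mem_Icc.1 (hC.1 hx); omega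
  | succ x =>
    have h1 := ht_succ B x
    have h2 := ht_succ C x
    rw [h, h, h2] at h1
    split_ifs at h1 <;> simp_all

lemma basis_iff {n r : ℕ} {α ω : Finset ℕ} (hα : IsLatticePath n r α) (hω : IsLatticePath n r ω)
    (B : Finset ℕ) : IsLPMBasis n r α ω B ↔
      IsLatticePath n r B ∧ ∀ k, ht ω k ≤ ht B k ∧ ht B k ≤ ht α k := by
  unfold IsLPMBasis
  constructor
  · rintro ⟨h, h1, h2⟩
    rw [above_iff _ _ (by rw [hα.2, h.2])] at h1
    rw [above_iff _ _ (by rw [hω.2, h.2])] at h2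
    exact ⟨h, fun k => ⟨h2 k, h1 k⟩⟩
  · rintro ⟨h, h1⟩
    rw [above_iff _ _ (by rw [hα.2, h.2]), above_iff _ _ (by rw [hω.2, h.2])]
    exact ⟨h, fun k => (h1 k).2, fun k => (h1 k).1⟩

lemma ht_exch (B : Finset ℕ) (i j : ℕ) (hi : i ∈ B) (hj : j ∉ B) (k : ℕ) :
    ht (insert j (B.erase i)) k + (if i ≤ k then 1 else 0) =
      ht B k + (if j ≤ k then 1 else 0) := by
  have key : ∀ A : Finset ℕ, ht A k = ∑ x ∈ A, if x ≤ k then 1 else 0 := by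
    intro A; unfold ht; rw [Finset.card_filter]
  rw [key, key, Finset.sum_insert (by simp [hj]), ← Finset.sum_erase_add B _ hi]
  ring

lemma exists_i (d : ℕ → ℤ) (h0 : d 0 ≤ 0) (k0 : ℕ) (hk : 1 ≤ d k0) :
    ∃ i, i < k0 ∧ d i ≤ 0 ∧ ∀ k, i < k → k ≤ k0 → 1 ≤ d k := by
  induction k0 with
  | zero => omega
  | succ m ih =>
    by_cases hm : 1 ≤ d m
    · obtain ⟨i, h1, h2, h3⟩ := ih hm
      refine ⟨i, by omega, h2, fun k a b => ?_⟩
      rcases Nat.lt_or_ge m k with h | h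
      · have : k = m + 1 := by omega
        rw [this]; exact hk
      · exact h3 k a h
    · refine ⟨m, by omega, by omega, fun k a b => ?_⟩
      have : k = m + 1 := by omega
      rw [this]; exact hk

lemma exists_j (d : ℕ → ℤ) (N k0 : ℕ) (hN : k0 ≤ N) (h0 : d N ≤ 0) (hk : 1 ≤ d k0) :
    ∃ j, k0 ≤ j ∧ j < N ∧ d (j+1) ≤ 0 ∧ ∀ k, k0 ≤ k → k ≤ j → 1 ≤ d k := by
  obtain ⟨m, rfl⟩ := Nat.exists_eq_add_of_le hN
  clear hN
  induction m generalizing k0 with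
  | zero => simp at h0; omega
  | succ m ih =>
    by_cases hm : 1 ≤ d (k0+1)
    · obtain ⟨j, h1, h2, h3, h4⟩ := ih (k0+1) hm (by rw [show k0+1+m = k0+(m+1) by ring]; exact h0)
      refine ⟨j, by omega, by omega, h3, fun k a b => ?_⟩
      rcases Nat.eq_or_lt_of_le a with h | h
      · rw [← h]; exact hk
      · exact h4 k h b
    · refine ⟨k0, le_rfl, by omega, by omega, fun k a b => ?_⟩
      have : k = k0 := by omega
      rw [this]; exact hk

lemma latpath_exch {n r : ℕ} {B B' : Finset ℕ} {i j : ℕ} (hB : IsLatticePath n r B)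
    (hB' : IsLatticePath n r B') (hi : i ∈ B) (hj : j ∈ B') (hj' : j ∉ B) :
    IsLatticePath n r (insert j (B.erase i)) := by
  constructor
  · intro x hx
    rw [Finset.mem_insert, Finset.mem_erase] at hx
    rcases hx with rfl | hx
    · exact hB'.1 hj
    · exact hB.1 hx.2
  · rw [Finset.card_insert_of_notMem (by simp [hj']), Finset.card_erase_of_mem hi, hB.2]
    have : 0 < B.card := Finset.card_pos.2 ⟨i, hi⟩
    have := hB.2
    omega

lemma exch {n r : ℕ} {α ω : Finset ℕ} (hα : IsLatticePath n r α) (hω : IsLatticePath n r ω)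
    {B B' : Finset ℕ} (hB : IsLPMBasis n r α ω B) (hB' : IsLPMBasis n r α ω B') (k0 : ℕ)
    (hkN : k0 ≤ n + r) (hk : ht B' k0 < ht B k0) :
    ∃ C C' : Finset ℕ, SymExchM (IsLPMBasis n r α ω) B B' C C' ∧ ∃ i j : ℕ, i ≤ k0 ∧ k0 < j ∧
      (∀ k, i ≤ k → k < j → ht B' k < ht B k ∧ ht C k + 1 = ht B k ∧ ht C' k = ht B' k + 1) ∧
      (∀ k, ¬ (i ≤ k ∧ k < j) → ht C k = ht B k ∧ ht C' k = ht B' k) := by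
  have hb := (basis_iff hα hω B).1 hB
  have hb' := (basis_iff hα hω B').1 hB'
  set d : ℕ → ℤ := fun k => (ht B k : ℤ) - ht B' k with hd
  have hdk : 1 ≤ d k0 := by simp only [hd]; omega
  obtain ⟨i, i1, i2, i3⟩ := exists_i d (by simp [hd, ht_zero hb.1, ht_zero hb'.1]) k0 hdk
  obtain ⟨j, j1, j2, j3, j4⟩ := exists_j d (n+r) k0 hkN
    (by simp [hd, ht_top hb.1, ht_top hb'.1]) hdk
  have hdpos : ∀ k, i + 1 ≤ k → k < j + 1 → ht B' k < ht B k := by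
    intro k a b
    have : 1 ≤ d k := by
      rcases Nat.le_total k k0 with h | h
      · exact i3 k a h
      · exact j4 k h (by omega)
    simp only [hd] at this; omega
  have hi : i + 1 ∈ B ∧ i + 1 ∉ B' := by
    have a := ht_succ B i
    have b := ht_succ B' i
    have c := hdpos (i+1) le_rfl (by omega)
    simp only [hd] at i2
    split_ifs at a b <;> first | omega | simp_all
  have hj : j + 1 ∈ B' ∧ j + 1 ∉ B := by
    have a := ht_succ B j
    have b := ht_succ B' j
    have c := hdpos j (by omega) (by omega)
    simp only [hd] at j3
    split_ifs at a b <;> first | omega | simp_all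
  have e1 := ht_exch B (i+1) (j+1) hi.1 hj.2
  have e2 := ht_exch B' (j+1) (i+1) hj.1 hi.2
  set C := insert (j+1) (B.erase (i+1)) with hC
  set C' := insert (i+1) (B'.erase (j+1)) with hC'
  have f1 : ∀ k, i + 1 ≤ k → k < j + 1 → 
      ht B' k < ht B k ∧ ht C k + 1 = ht B k ∧ ht C' k = ht B' k + 1 := by
    intro k a b
    have x := e1 k
    have y := e2 k
    rw [if_pos a, if_neg (by omega)] at x
    rw [if_pos a, if_neg (by omega)] at y
    exact ⟨hdpos k a b, by omega, by omega⟩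
  have f2 : ∀ k, ¬ (i + 1 ≤ k ∧ k < j + 1) → ht C k = ht B k ∧ ht C' k = ht B' k := by
    intro k a
    have x := e1 k
    have y := e2 k
    by_cases h : i + 1 ≤ k
    · rw [if_pos h, if_pos (by omega)] at x y
      omega
    · rw [if_neg h, if_neg (by omega)] at x y
      omega
  refine ⟨C, C', ⟨hB, hB', i+1, j+1, hi.1, hi.2, hj.1, hj.2, rfl, rfl, ?_, ?_⟩,
    i+1, j+1, i1, by omega, f1, f2⟩
  · rw [basis_iff hα hω]
    refine ⟨latpath_exch hb.1 hb'.1 hi.1 hj.1 hj.2, fun k => ?_⟩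
    have x := hb.2 k
    have y := hb'.2 k
    by_cases h : i + 1 ≤ k ∧ k < j + 1
    · have := f1 k h.1 h.2; omega
    · have := f2 k h; omega
  · rw [basis_iff hα hω]
    refine ⟨latpath_exch hb'.1 hb.1 hj.1 hi.1 hi.2, fun k => ?_⟩
    have x := hb.2 k
    have y := hb'.2 k
    by_cases h : i + 1 ≤ k ∧ k < j + 1
    · have := f1 k h.1 h.2; omega
    · have := f2 k h; omega

/-- first weight -/
def w1 (N : ℕ) (B : Finset ℕ) : ℕ := ∑ k ∈ Finset.range (N+1), ht B k ^ 2
/-- area -/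
def ar (N : ℕ) (B : Finset ℕ) : ℕ := ∑ k ∈ Finset.range (N+1), ht B k
/-- second weight -/
def w2 (N r : ℕ) (B : Finset ℕ) : ℕ := ((N+1) * r)^2 - ar N B ^ 2

lemma w2_eq {n r : ℕ} (N : ℕ) {B : Finset ℕ} (hB : IsLatticePath n r B) :
    w2 N r B + ar N B ^ 2 = ((N+1) * r)^2 := by
  unfold w2
  apply Nat.sub_add_cancel
  apply Nat.pow_le_pow_left
  unfold ar
  calc _ ≤ ∑ k ∈ Finset.range (N+1), r := Finset.sum_le_sum fun k _ => by
        rw [← hB.2]; exact ht_le_card _ _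
    _ = _ := by simp

lemma decr {n r : ℕ} {α ω : Finset ℕ} (hα : IsLatticePath n r α) (hω : IsLatticePath n r ω)
    {B B' : Finset ℕ} (hB : IsLPMBasis n r α ω B) (hB' : IsLPMBasis n r α ω B') (k0 : ℕ)
    (hkN : k0 ≤ n + r) (hk : ht B' k0 < ht B k0)
    (h : ht B' k0 + 1 < ht B k0 ∨ ar (n+r) B ≤ ar (n+r) B') :
    ∃ C C' : Finset ℕ, SymExchM (IsLPMBasis n r α ω) B B' C C' ∧
      (w1 (n+r) C + w1 (n+r) C' < w1 (n+r) B + w1 (n+r) B' ∨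
      (w1 (n+r) C + w1 (n+r) C' = w1 (n+r) B + w1 (n+r) B' ∧
        w2 (n+r) r C + w2 (n+r) r C' < w2 (n+r) r B + w2 (n+r) r B')) := by
  obtain ⟨C, C', hS, i, j, hi, hj, f1, f2⟩ := exch hα hω hB hB' k0 hkN hk
  refine ⟨C, C', hS, ?_⟩
  have hC : IsLPMBasis n r α ω C ∧ IsLPMBasis n r α ω C' := by
    obtain ⟨-, -, i, j, -, -, -, -, -, -, a, b⟩ := hS
    exact ⟨a, b⟩
  have hle : ∀ k, ht C k ^ 2 + ht C' k ^ 2 ≤ ht B k ^ 2 + ht B' k ^ 2 := by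
    intro k
    by_cases hh : i ≤ k ∧ k < j
    · obtain ⟨a, b, c⟩ := f1 k hh.1 hh.2
      rw [c, ← b]; nlinarith
    · obtain ⟨a, b⟩ := f2 k hh
      rw [a, b]
  have hmem : k0 ∈ Finset.range (n+r+1) := by simp; omega
  have hw1 : w1 (n+r) C + w1 (n+r) C' ≤ w1 (n+r) B + w1 (n+r) B' := by
    unfold w1
    rw [← Finset.sum_add_distrib, ← Finset.sum_add_distrib]
    exact Finset.sum_le_sum fun k _ => hle k
  rcases h with h | h
  · left
    unfold w1
    rw [← Finset.sum_add_distrib, ← Finset.sum_add_distrib]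
    refine Finset.sum_lt_sum (fun k _ => hle k) ⟨k0, hmem, ?_⟩
    obtain ⟨a, b, c⟩ := f1 k0 hi hj
    rw [c, ← b]; nlinarith
  · rcases hw1.lt_or_eq with h' | h'
    · exact Or.inl h'
    · refine Or.inr ⟨h', ?_⟩
      have s1 : ar (n+r) C + ar (n+r) C' = ar (n+r) B + ar (n+r) B' := by
        unfold ar
        rw [← Finset.sum_add_distrib, ← Finset.sum_add_distrib]
        refine Finset.sum_congr rfl fun k _ => ?_
        by_cases hh : i ≤ k ∧ k < j
        · have := f1 k hh.1 hh.2; omega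
        · have := f2 k hh; omega
      have s2 : ar (n+r) C < ar (n+r) B := by
        unfold ar
        refine Finset.sum_lt_sum (fun k _ => ?_) ⟨k0, hmem, ?_⟩
        · by_cases hh : i ≤ k ∧ k < j
          · have := f1 k hh.1 hh.2; omega
          · have := f2 k hh; omega
        · have := f1 k0 hi hj; omega
      have a1 := w2_eq (n+r) hB.1
      have a2 := w2_eq (n+r) hB'.1
      have a3 := w2_eq (n+r) hC.1.1
      have a4 := w2_eq (n+r) hC.2.1
      obtain ⟨l, hl⟩ := Nat.exists_eq_add_of_lt s2
      have hl' : ar (n+r) C' = ar (n+r) B' + (l + 1) := by omega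
      have : ar (n+r) B ^2 + ar (n+r) B' ^ 2 < ar (n+r) C ^ 2 + ar (n+r) C' ^ 2 := by
        rw [hl', hl]; rw [hl] at h; nlinarith
      omega

section
variable {X : Type*}

/-- linear extension of a weight -/
noncomputable def wt (w : X → ℕ) : (X →₀ ℕ) →+ ℕ :=
  (Finsupp.linearCombination ℕ w).toAddMonoidHom

lemma wt_apply (w : X → ℕ) (M : X →₀ ℕ) : wt w M = ∑ B ∈ M.support, M B * w B := by
  simp [wt, Finsupp.linearCombination_apply, Finsupp.sum]

@[simp] lemma wt_single (w : X → ℕ) (B : X) (c : ℕ) : wt w (Finsupp.single B c) = c * w B := by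
  simp [wt]

/-- the ordering key -/
noncomputable def key (m : MonomialOrder X) (a b : X → ℕ) (M : X →₀ ℕ) : ℕ ×ₗ (ℕ ×ₗ m.syn) :=
  toLex (wt a M, toLex (wt b M, m.toSyn M))

lemma key_lt (m : MonomialOrder X) (a b : X → ℕ) (M M' : X →₀ ℕ) :
    key m a b M < key m a b M' ↔ wt a M < wt a M' ∨ (wt a M = wt a M' ∧
      (wt b M < wt b M' ∨ (wt b M = wt b M' ∧ m.toSyn M < m.toSyn M'))) := by
  simp [key, Prod.Lex.lt_iff]

lemma key_inj (m : MonomialOrder X) (a b : X → ℕ) (M M' : X →₀ ℕ)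
    (h : key m a b M = key m a b M') : M = M' := by
  have := congrArg (fun z => (ofLex (ofLex z).2).2) h
  simpa [key] using this

lemma key_mono (m : MonomialOrder X) (a b : X → ℕ) :
    IsMonomialOrder (fun M M' => key m a b M' < key m a b M) := by
  refine ⟨fun M M' => ?_, fun M => lt_irrefl _, fun M M' M'' h1 h2 => h2.trans h1, fun M hM => ?_,
    fun M M' N h => ?_⟩
  · rcases lt_trichotomy (key m a b M) (key m a b M') with h | h | h
    · exact Or.inr (Or.inr h)
    · exact Or.inl (key_inj _ _ _ _ _ h)
    · exact Or.inr (Or.inl h)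
  · simp only [key_lt, map_zero]
    have : (0 : m.syn) < m.toSyn M := by
      rw [← m.bot_eq_zero, bot_lt_iff_ne_bot, m.bot_eq_zero]
      simpa using hM
    by_cases h1 : wt a M = 0
    · by_cases h2 : wt b M = 0
      · right; exact ⟨h1.symm, Or.inr ⟨h2.symm, this⟩⟩
      · right; exact ⟨h1.symm, Or.inl (Nat.pos_of_ne_zero h2)⟩
    · left; exact Nat.pos_of_ne_zero h1
  · simp only [key_lt, map_add] at h ⊢
    simpa using h

end

lemma exists_mo (X : Type) [Finite X] : Nonempty (MonomialOrder.{0, 0} X) := by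
  obtain ⟨m, ⟨e⟩⟩ := Finite.exists_equiv_fin X
  let _ : LinearOrder X := LinearOrder.lift' e e.injective
  exact ⟨MonomialOrder.lex⟩

/-- exponent vector of the image monomial -/
noncomputable def expo (P : Finset ℕ → Prop) : ({B : Finset ℕ // P B} →₀ ℕ) →+ (ℕ →₀ ℕ) :=
  (Finsupp.linearCombination ℕ
    (fun B : {B : Finset ℕ // P B} => ∑ i ∈ B.1, Finsupp.single i 1)).toAddMonoidHom

lemma expo_single (P : Finset ℕ → Prop) (B : {B : Finset ℕ // P B}) (c : ℕ) :
    expo P (Finsupp.single B c) = c • ∑ i ∈ B.1, Finsupp.single i 1 := by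
  simp [expo]

lemma toric_monomial (P : Finset ℕ → Prop) (m : {B : Finset ℕ // P B} →₀ ℕ) (c : ℂ) :
    toricMapM P (MvPolynomial.monomial m c) = MvPolynomial.monomial (expo P m) c := by
  have hX : ∀ B : {B : Finset ℕ // P B}, (∏ i ∈ B.1, (MvPolynomial.X i : MvPolynomial ℕ ℂ)) =
      MvPolynomial.monomial (∑ i ∈ B.1, Finsupp.single i 1) 1 := by
    intro B
    rw [MvPolynomial.monomial_sum_one]
    rfl
  unfold toricMapM
  rw [MvPolynomial.aeval_monomial]
  simp only [hX, MvPolynomial.monomial_pow, one_pow]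
  rw [Finsupp.prod, ← MvPolynomial.monomial_sum_one]
  rw [MvPolynomial.algebraMap_eq, MvPolynomial.C_mul_monomial, mul_one]
  congr 1

lemma exists_other (P : Finset ℕ → Prop) (f : MvPolynomial {B : Finset ℕ // P B} ℂ)
    (hf : toricMapM P f = 0) (d : {B : Finset ℕ // P B} →₀ ℕ) (hd : d ∈ f.support) :
    ∃ d' ∈ f.support, d' ≠ d ∧ expo P d' = expo P d := by
  by_contra hcon
  push Not at hcon
  have h1 : toricMapM P f =
      ∑ m ∈ f.support, MvPolynomial.monomial (expo P m) (MvPolynomial.coeff m f) := by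
    conv_lhs => rw [f.as_sum]
    rw [map_sum]
    exact Finset.sum_congr rfl fun m _ => toric_monomial P m _
  have h2 := congrArg (MvPolynomial.coeff (expo P d)) (h1.symm.trans hf)
  rw [MvPolynomial.coeff_sum, Finset.sum_eq_single d] at h2
  · rw [MvPolynomial.coeff_monomial, if_pos rfl] at h2
    exact MvPolynomial.mem_support_iff.1 hd (by simpa using h2)
  · intro b hb hbd
    rw [MvPolynomial.coeff_monomial, if_neg (hcon b hb hbd)]
  · intro h; exact absurd hd h

lemma wt_ht_expo (P : Finset ℕ → Prop) (k : ℕ) (M : {B : Finset ℕ // P B} →₀ ℕ) :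
    wt (fun i : ℕ => if i ≤ k then 1 else 0) (expo P M) = wt (fun B => ht B.1 k) M := by
  induction M using Finsupp.induction_linear with
  | zero => simp
  | add f g hf hg => simp [hf, hg]
  | single B c =>
    rw [expo_single, wt_single, map_nsmul, map_sum]
    simp [ht]

/-- sortedness -/
def Nrm (N : ℕ) {P : Finset ℕ → Prop} (M : {B : Finset ℕ // P B} →₀ ℕ) : Prop :=
  ∀ B ∈ M.support, ∀ B' ∈ M.support, ∀ k ≤ N, ht B.1 k ≤ ht B'.1 k + 1 ∧
    (ar N B.1 ≤ ar N B'.1 → ht B.1 k ≤ ht B'.1 k)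

lemma top_lem {N : ℕ} {P : Finset ℕ → Prop} (M : {B : Finset ℕ // P B} →₀ ℕ) (hM : Nrm N M)
    (h0 : M ≠ 0) : ∃ T ∈ M.support, ∀ k ≤ N,
      wt (fun B => ht B.1 k) M ≤ wt (fun _ => 1) M * ht T.1 k ∧
      wt (fun _ => 1) M * ht T.1 k < wt (fun B => ht B.1 k) M + wt (fun _ => 1) M := by
  obtain ⟨T, hT, hmax⟩ := Finset.exists_max_image M.support (fun B => ar N B.1)
    (Finsupp.support_nonempty_iff.2 h0)
  refine ⟨T, hT, fun k hk => ?_⟩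
  simp only [wt_apply, Finset.sum_mul, ← Finset.sum_add_distrib, mul_one]
  constructor
  · exact Finset.sum_le_sum fun B hB =>
      Nat.mul_le_mul_left _ ((hM B hB T hT k hk).2 (hmax B hB))
  · refine Finset.sum_lt_sum (fun B hB => ?_) ⟨T, hT, ?_⟩
    · have := (hM T hT B hB k hk).1
      nlinarith [Nat.mul_le_mul_left (M B) this]
    · have := Finsupp.mem_support_iff.1 hT
      omega

lemma ht_big {n r : ℕ} {B : Finset ℕ} (h : IsLatticePath n r B) {k : ℕ} (hk : n + r ≤ k) :
    ht B k = r := by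
  unfold ht
  rw [Finset.filter_true_of_mem, h.2]
  intro x hx
  exact (Finset.mem_Icc.1 (h.1 hx)).2.trans hk

lemma unique_nrm {n r : ℕ} (hr : 0 < r) {P : Finset ℕ → Prop}
    (hP : ∀ B, P B → IsLatticePath n r B) :
    ∀ (D : ℕ) (M M' : {B : Finset ℕ // P B} →₀ ℕ), wt (fun _ => 1) M = D → Nrm (n+r) M →
      Nrm (n+r) M' → expo P M = expo P M' → M = M' := by
  have degz : ∀ M : {B : Finset ℕ // P B} →₀ ℕ, wt (fun _ => 1) M = 0 → M = 0 := by
    intro M h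
    rw [wt_apply, Finset.sum_eq_zero_iff] at h
    by_contra h0
    obtain ⟨B, hB⟩ := Finsupp.support_nonempty_iff.2 h0
    have := h B hB
    have := Finsupp.mem_support_iff.1 hB
    omega
  have degr : ∀ M : {B : Finset ℕ // P B} →₀ ℕ,
      wt (fun B => ht B.1 (n+r)) M = wt (fun _ => 1) M * r := by
    intro M
    rw [wt_apply, wt_apply, Finset.sum_mul]
    refine Finset.sum_congr rfl fun B _ => ?_
    rw [ht_top (hP B.1 B.2), mul_one]
  intro D
  induction D with
  | zero =>
    intro M M' hD _ _ he
    have a := degr M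
    have b := degr M'
    rw [← wt_ht_expo, he, wt_ht_expo, b, hD, zero_mul] at a
    have : wt (fun _ => 1) M' = 0 := by
      rcases Nat.mul_eq_zero.1 a with h | h
      · exact h
      · omega
    rw [degz M hD, degz M' this]
  | succ D ih =>
    intro M M' hD hM hM' he
    have hH : ∀ k, wt (fun B : {B : Finset ℕ // P B} => ht B.1 k) M =
        wt (fun B => ht B.1 k) M' := by
      intro k; rw [← wt_ht_expo, he, wt_ht_expo]
    have hD' : wt (fun _ => 1) M' = D + 1 := by
      have a := degr M
      rw [hH, degr, hD] at a
      exact Nat.eq_of_mul_eq_mul_right hr a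
    have hM0 : M ≠ 0 := by rintro rfl; simp at hD
    have hM0' : M' ≠ 0 := by rintro rfl; simp at hD'
    obtain ⟨T, hT, t⟩ := top_lem M hM hM0
    obtain ⟨T', hT', t'⟩ := top_lem M' hM' hM0'
    have hTT : T = T' := by
      apply Subtype.ext
      refine ht_ext (hP _ T.2) (hP _ T'.2) fun k => ?_
      rcases Nat.le_total k (n+r) with hk | hk
      · have a := t k hk
        have b := t' k hk
        rw [hH, hD] at a
        rw [hD'] at b
        have x : (D+1) * ht T.1 k < (D+1) * (ht T'.1 k + 1) := by rw [mul_add]; omega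
        have y : (D+1) * ht T'.1 k < (D+1) * (ht T.1 k + 1) := by rw [mul_add]; omega
        have x := Nat.lt_of_mul_lt_mul_left x
        have y := Nat.lt_of_mul_lt_mul_left y
        omega
      · rw [ht_big (hP _ T.2) hk, ht_big (hP _ T'.2) hk]
    subst hTT
    have split : ∀ M : {B : Finset ℕ // P B} →₀ ℕ, T ∈ M.support → Nrm (n+r) M →
        ∃ Q, M = Q + Finsupp.single T 1 ∧ Nrm (n+r) Q := by
      intro M hT hM
      have hle : Finsupp.single T 1 ≤ M := by
        rw [Finsupp.single_le_iff]
        exact Nat.one_le_iff_ne_zero.2 (Finsupp.mem_support_iff.1 hT)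
      have e := (tsub_add_cancel_of_le hle).symm
      refine ⟨M - Finsupp.single T 1, e, ?_⟩
      have hs : ∀ B, B ∈ (M - Finsupp.single T 1).support → B ∈ M.support := by
        intro B hB
        rw [Finsupp.mem_support_iff] at *
        rw [e]
        simp only [Finsupp.add_apply]
        omega
      exact fun B hB B' hB' => hM B (hs B hB) B' (hs B' hB')
    obtain ⟨Q, rfl, hQ⟩ := split M hT hM
    obtain ⟨Q', rfl, hQ'⟩ := split M' hT' hM'
    rw [ih Q Q' (by simpa using hD) hQ hQ' (by simpa using he)]

lemma exch_expo {P : Finset ℕ → Prop} {B B' C C' : {B : Finset ℕ // P B}}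
    (h : SymExchM P B.1 B'.1 C.1 C'.1) :
    expo P (Finsupp.single C 1 + Finsupp.single C' 1) =
      expo P (Finsupp.single B 1 + Finsupp.single B' 1) := by
  obtain ⟨-, -, i, j, hi, hi', hj, hj', hC, hC', -, -⟩ := h
  simp only [map_add, expo_single, one_smul]
  rw [hC, hC', Finset.sum_insert (by simp [hj']), Finset.sum_insert (by simp [hi']),
    ← Finset.sum_erase_add B.1 _ hi, ← Finset.sum_erase_add B'.1 _ hj]
  abel

/-- a non-sorted monomial admits a decreasing exchange -/
lemma not_nrm {n r : ℕ} {α ω : Finset ℕ} (hα : IsLatticePath n r α) (hω : IsLatticePath n r ω)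
    (m : MonomialOrder {B : Finset ℕ // IsLPMBasis n r α ω B})
    (M : {B : Finset ℕ // IsLPMBasis n r α ω B} →₀ ℕ) (hM : ¬ Nrm (n+r) M) :
    ∃ B B' C C' : {B : Finset ℕ // IsLPMBasis n r α ω B},
      SymExchM (IsLPMBasis n r α ω) B.1 B'.1 C.1 C'.1 ∧
      key m (fun B => w1 (n+r) B.1) (fun B => w2 (n+r) r B.1)
        (Finsupp.single C 1 + Finsupp.single C' 1) <
      key m (fun B => w1 (n+r) B.1) (fun B => w2 (n+r) r B.1)
        (Finsupp.single B 1 + Finsupp.single B' 1) ∧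
      Finsupp.single B 1 + Finsupp.single B' 1 ≤ M := by
  unfold Nrm at hM
  push Not at hM
  obtain ⟨B, hB, B', hB', k, hk, h⟩ := hM
  have h' : ht B'.1 k < ht B.1 k ∧
      (ht B'.1 k + 1 < ht B.1 k ∨ ar (n+r) B.1 ≤ ar (n+r) B'.1) := by
    by_cases hh : ht B.1 k ≤ ht B'.1 k + 1
    · obtain ⟨a, b⟩ := h hh
      exact ⟨b, Or.inr a⟩
    · exact ⟨by omega, by omega⟩
  have hne : B ≠ B' := by
    rintro rfl; exact lt_irrefl _ h'.1
  obtain ⟨C, C', hS, hw⟩ := decr hα hω B.2 B'.2 k hk h'.1 h'.2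
  have hC : IsLPMBasis n r α ω C ∧ IsLPMBasis n r α ω C' := by
    obtain ⟨-, -, i, j, -, -, -, -, -, -, a, b⟩ := hS
    exact ⟨a, b⟩
  refine ⟨B, B', ⟨C, hC.1⟩, ⟨C', hC.2⟩, hS, ?_, ?_⟩
  · rw [key_lt]
    simp only [map_add, wt_single, one_mul]
    rcases hw with hw | hw
    · exact Or.inl hw
    · exact Or.inr ⟨hw.1, Or.inl hw.2⟩
  · intro A
    rw [Finsupp.mem_support_iff] at hB hB'
    simp only [Finsupp.add_apply, Finsupp.single_apply]
    split_ifs with a b b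
    · exact absurd (a.trans b.symm) hne
    · subst a; omega
    · subst b; omega
    · omega

end LPM

/-- There is a monomial order on the base ring of a lattice path matroid under
which the symmetric exchange binomials form a Gröbner basis of the toric
ideal. -/
theorem stmt9 (n r : ℕ) (hn : 0 < n) (hr : 0 < r) (α ω : Finset ℕ)
    (hα : IsLatticePath n r α) (hω : IsLatticePath n r ω) (hαω : PathAbove α ω) :
    ∃ succ : ({B : Finset ℕ // IsLPMBasis n r α ω B} →₀ ℕ) →
        ({B : Finset ℕ // IsLPMBasis n r α ω B} →₀ ℕ) → Prop,
      IsMonomialOrder succ ∧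
      ∀ f : MvPolynomial {B : Finset ℕ // IsLPMBasis n r α ω B} ℂ,
        f ∈ RingHom.ker (toricMapM (IsLPMBasis n r α ω)) → f ≠ 0 →
          ∃ d, IsLeadMonOf succ f d ∧
            ∃ g ∈ SEBM (IsLPMBasis n r α ω), ∃ e, IsLeadMonOf succ g e ∧ e ≤ d := by
  classical
  have hfin : Finite {B : Finset ℕ // IsLPMBasis n r α ω B} := by
    apply Set.Finite.to_subtype (s := {B | IsLPMBasis n r α ω B})
    refine (Finset.finite_toSet (Finset.powerset (Finset.Icc 1 (n+r)))).subset ?_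
    intro B hB
    exact Finset.mem_coe.2 (Finset.mem_powerset.2 hB.1.1)
  obtain ⟨m⟩ := LPM.exists_mo {B : Finset ℕ // IsLPMBasis n r α ω B}
  set K := LPM.key m (fun B => LPM.w1 (n+r) B.1) (fun B => LPM.w2 (n+r) r B.1) with hK
  have hmo := LPM.key_mono m (fun B : {B : Finset ℕ // IsLPMBasis n r α ω B} =>
    LPM.w1 (n+r) B.1) (fun B => LPM.w2 (n+r) r B.1)
  refine ⟨fun M M' => K M' < K M, hmo, fun f hf hf0 => ?_⟩
  have hf' : toricMapM _ f = 0 := hf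
  obtain ⟨d, hd, hmax⟩ := Finset.exists_max_image f.support K
    (MvPolynomial.support_nonempty.2 hf0)
  refine ⟨d, ⟨hd, fun d' hd' hne => lt_of_le_of_ne (hmax d' hd') fun h =>
    hne (LPM.key_inj _ _ _ _ _ h)⟩, ?_⟩
  obtain ⟨d', hd', hne, hexp⟩ := LPM.exists_other _ f hf' d hd
  have hlt : K d' < K d := lt_of_le_of_ne (hmax d' hd') fun h => hne (LPM.key_inj _ _ _ _ _ h)
  have hnot : ¬ LPM.Nrm (n+r) d := by
    intro hN
    have hwf : WellFounded (fun a b => K a < K b) := InvImage.wf K wellFounded_lt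
    obtain ⟨q, hq, hqmin⟩ := hwf.has_min
      {q | LPM.expo (IsLPMBasis n r α ω) q = LPM.expo _ d} ⟨d, rfl⟩
    have hqN : LPM.Nrm (n+r) q := by
      by_contra hqN
      obtain ⟨B, B', C, C', hS, hk, hle⟩ := LPM.not_nrm hα hω m q hqN
      obtain ⟨t, rfl⟩ := exists_add_of_le hle
      refine hqmin (Finsupp.single C 1 + Finsupp.single C' 1 + t) ?_ ?_
      · rw [Set.mem_ofPred_eq, map_add, LPM.exch_expo hS, ← map_add]
        exact hq
      · exact hmo.2.2.2.2 _ _ t hk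
    have hqd : q = d := LPM.unique_nrm hr (fun B hB => hB.1) _ q d rfl hqN hN hq
    exact hqmin d' hexp (hqd ▸ hlt)
  obtain ⟨B, B', C, C', hS, hk, hle⟩ := LPM.not_nrm hα hω m d hnot
  refine ⟨_, ⟨B, B', C, C', hS, rfl⟩, _, ⟨?_, ?_⟩, hle⟩
  all_goals
    have hne2 : Finsupp.single C 1 + Finsupp.single C' 1 ≠
        Finsupp.single B 1 + Finsupp.single B' 1 := by
      intro h; rw [h] at hk; exact lt_irrefl _ hk
    have e1 : ∀ A A' : {B : Finset ℕ // IsLPMBasis n r α ω B},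
        (MvPolynomial.X A * MvPolynomial.X A' : MvPolynomial _ ℂ) =
        MvPolynomial.monomial (Finsupp.single A 1 + Finsupp.single A' 1) 1 := by
      intro A A'
      simp [MvPolynomial.X, MvPolynomial.monomial_mul]
  · rw [MvPolynomial.mem_support_iff, e1, e1, MvPolynomial.coeff_sub,
      MvPolynomial.coeff_monomial, MvPolynomial.coeff_monomial, if_pos rfl, if_neg hne2]
    simp
  · intro e he hne3
    rw [MvPolynomial.mem_support_iff, e1, e1, MvPolynomial.coeff_sub,
      MvPolynomial.coeff_monomial, MvPolynomial.coeff_monomial, if_neg (Ne.symm hne3)] at he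
    have : Finsupp.single C 1 + Finsupp.single C' 1 = e := by
      by_contra hcc
      rw [if_neg hcc] at he
      simp at he
    rw [← this]
    exact hk
end

section
/- Let α ⪰ ω be lattice paths from (0,0) to (n,r). Then the collection B = {N(σ) : α ⪰ σ ⪰ ω} of r-element subsets of {1,…,n+r} is the set of bases of a matroid: B is nonempty, and for all B, B' ∈ B and every b ∈ B \ B' there exists b' ∈ B' \ B with (B \ {b}) ∪ {b'} ∈ B. -/
/-- Number of elements of `S` that are at most `i`. -/
def cnt (S : Finset ℕ) (i : ℕ) : ℕ := (S.filter (· ≤ i)).card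

lemma key (r : ℕ) (S : Finset ℕ) (hS : S.card = r) (k : Fin r) (i : ℕ) :
    S.orderEmbOfFin hS k ≤ i ↔ (k : ℕ) < cnt S i := by
  constructor
  · intro h
    have hsub : (Finset.Iic k).map (S.orderEmbOfFin hS).toEmbedding ⊆ S.filter (· ≤ i) := by
      intro x hx
      simp only [Finset.mem_map, Finset.mem_Iic] at hx
      obtain ⟨j, hj, rfl⟩ := hx
      simp only [Finset.mem_filter]
      exact ⟨Finset.orderEmbOfFin_mem S hS j, le_trans ((S.orderEmbOfFin hS).monotone hj) h⟩
    have := Finset.card_le_card hsub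
    rw [Finset.card_map, Fin.card_Iic] at this
    unfold cnt
    omega
  · intro h
    by_contra hc
    have hsub : S.filter (· ≤ i) ⊆ (Finset.Iio k).map (S.orderEmbOfFin hS).toEmbedding := by
      intro x hx
      simp only [Finset.mem_filter] at hx
      have : x ∈ Set.range (S.orderEmbOfFin hS) := by
        rw [Finset.range_orderEmbOfFin]; exact hx.1
      obtain ⟨j, rfl⟩ := this
      simp only [Finset.mem_map, Finset.mem_Iio]
      refine ⟨j, ?_, rfl⟩
      by_contra hj
      exact hc (le_trans ((S.orderEmbOfFin hS).monotone (not_lt.mp hj)) hx.2)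
    have := Finset.card_le_card hsub
    rw [Finset.card_map, Fin.card_Iio] at this
    unfold cnt at h
    omega

lemma pathAbove_iff_s10 (r : ℕ) (S T : Finset ℕ) (hS : S.card = r) (hT : T.card = r) :
    PathAbove S T ↔ ∀ i, cnt T i ≤ cnt S i := by
  have h0 : PathAbove S T ↔ ∀ k : Fin r, S.orderEmbOfFin hS k ≤ T.orderEmbOfFin hT k := by
    unfold PathAbove
    constructor
    · intro h k
      simp only [Finset.orderEmbOfFin_apply]
      exact h k (by simp [hS]) (by simp [hT])
    · intro h k h1 h2
      have := h ⟨k, by simpa [hS] using h1⟩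
      simp only [Finset.orderEmbOfFin_apply] at this
      exact this
  rw [h0]
  constructor
  · intro h i
    by_contra hc
    push Not at hc
    have hle : cnt T i ≤ r := hT ▸ Finset.card_filter_le _ _
    have h1 := (key r T hT ⟨cnt S i, by omega⟩ i).2 hc
    have h2 := (key r S hS ⟨cnt S i, by omega⟩ i).1 (le_trans (h _) h1)
    simp at h2
  · intro h k
    rw [key]
    exact lt_of_lt_of_le ((key r T hT k _).1 le_rfl) (h _)

lemma cnt_succ (S : Finset ℕ) (i : ℕ) :
    cnt S (i+1) = cnt S i + if i+1 ∈ S then 1 else 0 := by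
  unfold cnt
  split_ifs with h
  · have : S.filter (· ≤ i+1) = insert (i+1) (S.filter (· ≤ i)) := by
      ext x; simp only [Finset.mem_filter, Finset.mem_insert]; grind
    rw [this, Finset.card_insert_of_notMem (by simp)]
  · have : S.filter (· ≤ i+1) = S.filter (· ≤ i) := by
      ext x; simp only [Finset.mem_filter]; grind
    rw [this]; rfl

lemma cnt_exch (S : Finset ℕ) (b c : ℕ) (hb : b ∈ S) (hc : c ∉ S) (i : ℕ) :
    cnt (insert c (S.erase b)) i + (if b ≤ i then 1 else 0)
      = cnt S i + if c ≤ i then 1 else 0 := by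
  unfold cnt
  simp only [Finset.card_filter]
  rw [Finset.sum_insert (by simp [hc]), ← Finset.add_sum_erase S _ hb]
  omega

lemma latticePath_exch (n r : ℕ) (S T : Finset ℕ) (b c : ℕ) (hS : IsLatticePath n r S)
    (hT : IsLatticePath n r T) (hb : b ∈ S) (hc : c ∈ T) (hcS : c ∉ S) :
    IsLatticePath n r (insert c (S.erase b)) := by
  constructor
  · intro x hx
    rcases Finset.mem_insert.1 hx with rfl | hx
    · exact hT.1 hc
    · exact hS.1 (Finset.mem_of_mem_erase hx)
  · rw [Finset.card_insert_of_notMem (by simp [hcS]), Finset.card_erase_of_mem hb]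
    have := Finset.card_pos.2 ⟨b, hb⟩
    have := hS.2
    omega

lemma cnt_zero (n r : ℕ) (S : Finset ℕ) (hS : IsLatticePath n r S) : cnt S 0 = 0 := by
  unfold cnt
  rw [Finset.card_eq_zero, Finset.filter_eq_empty_iff]
  intro x hx
  have := Finset.mem_Icc.1 (hS.1 hx)
  omega

lemma cnt_top (n r : ℕ) (S : Finset ℕ) (hS : IsLatticePath n r S) : cnt S (n+r) = r := by
  unfold cnt
  rw [Finset.filter_true_of_mem, hS.2]
  intro x hx
  exact (Finset.mem_Icc.1 (hS.1 hx)).2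

/-- Last crossing before `m`. -/
lemma down (B C : Finset ℕ) (h0 : cnt C 0 ≤ cnt B 0) (m : ℕ) (h : cnt B m < cnt C m) :
    ∃ c, c ≤ m ∧ c ∈ C ∧ c ∉ B ∧ ∀ i, c ≤ i → i ≤ m → cnt B i < cnt C i := by
  induction m with
  | zero => omega
  | succ m ih =>
    by_cases hm : cnt B m < cnt C m
    · obtain ⟨c, h1, h2, h3, h4⟩ := ih hm
      refine ⟨c, by omega, h2, h3, fun i hi hi2 => ?_⟩
      rcases Nat.lt_or_ge m i with h5 | h5
      · obtain rfl : i = m + 1 := by omega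
        exact h
      · exact h4 i hi h5
    · have e1 := cnt_succ B m
      have e2 := cnt_succ C m
      refine ⟨m+1, le_rfl, ?_, ?_, fun i hi hi2 => ?_⟩
      · by_contra hh
        rw [if_neg hh] at e2
        omega
      · intro hh
        rw [if_pos hh] at e1
        split_ifs at e2 <;> omega
      · obtain rfl : i = m + 1 := by omega
        exact h

/-- First crossing after `b`. -/
lemma up (B C : Finset ℕ) (d : ℕ) : ∀ b, cnt C b < cnt B b → cnt B (b+d) ≤ cnt C (b+d) →
    ∃ c, b < c ∧ c ∈ C ∧ c ∉ B ∧ ∀ i, b ≤ i → i < c → cnt C i < cnt B i := by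
  induction d with
  | zero => intro b h1 h2; simp at h2; omega
  | succ d ih =>
    intro b h1 h2
    by_cases hb : cnt C (b+1) < cnt B (b+1)
    · obtain ⟨c, g1, g2, g3, g4⟩ := ih (b+1) hb (by rwa [show b + 1 + d = b + (d + 1) by omega])
      refine ⟨c, by omega, g2, g3, fun i hi hi2 => ?_⟩
      rcases Nat.eq_or_lt_of_le hi with rfl | h5
      · exact h1
      · exact g4 i h5 hi2
    · have e1 := cnt_succ B b
      have e2 := cnt_succ C b
      refine ⟨b+1, by omega, ?_, ?_, fun i hi hi2 => ?_⟩
      · by_contra hh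
        rw [if_neg hh] at e2
        omega
      · intro hh
        rw [if_pos hh] at e1
        split_ifs at e2 <;> omega
      · obtain rfl : i = b := by omega
        exact h1

/-- The collection `{N(σ) : α ⪰ σ ⪰ ω}` is the set of bases of a matroid: it is
nonempty and satisfies the basis exchange axiom. -/
theorem stmt10 (n r : ℕ) (hn : 0 < n) (hr : 0 < r) (α ω : Finset ℕ)
    (hα : IsLatticePath n r α) (hω : IsLatticePath n r ω) (hαω : PathAbove α ω) :
    (∃ B, IsLPMBasis n r α ω B) ∧
    ∀ B B', IsLPMBasis n r α ω B → IsLPMBasis n r α ω B' →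
      ∀ b ∈ B \ B', ∃ b' ∈ B' \ B, IsLPMBasis n r α ω (insert b' (B.erase b)) := by
  refine ⟨⟨α, hα, (pathAbove_iff_s10 r α α hα.2 hα.2).2 fun i => le_rfl, hαω⟩, ?_⟩
  rintro B C ⟨hB, hB1, hB2⟩ ⟨hC, hC1, hC2⟩ b hb
  obtain ⟨hbB, hbC⟩ := Finset.mem_sdiff.1 hb
  rw [pathAbove_iff_s10 r _ _ hα.2 hB.2] at hB1
  rw [pathAbove_iff_s10 r _ _ hB.2 hω.2] at hB2
  rw [pathAbove_iff_s10 r _ _ hα.2 hC.2] at hC1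
  rw [pathAbove_iff_s10 r _ _ hC.2 hω.2] at hC2
  have hbI := Finset.mem_Icc.1 (hB.1 hbB)
  have b0 := cnt_zero n r B hB
  have c0 := cnt_zero n r C hC
  have b1 := cnt_top n r B hB
  have c1 := cnt_top n r C hC
  obtain ⟨m, rfl⟩ : ∃ m, b = m + 1 := ⟨b - 1, by omega⟩
  by_cases h : cnt B m < cnt C m
  · obtain ⟨c, g1, g2, g3, g4⟩ := down B C (by omega) m h
    have hL := latticePath_exch n r B C (m+1) c hB hC hbB g2 g3
    refine ⟨c, Finset.mem_sdiff.2 ⟨g2, g3⟩, hL, ?_, ?_⟩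
    · rw [pathAbove_iff_s10 r _ _ hα.2 hL.2]
      intro i
      have e := cnt_exch B (m+1) c hbB g3 i
      have := hB1 i
      have := hC1 i
      have := g4 i
      split_ifs at e <;> omega
    · rw [pathAbove_iff_s10 r _ _ hL.2 hω.2]
      intro i
      have e := cnt_exch B (m+1) c hbB g3 i
      have := hB2 i
      split_ifs at e <;> omega
  · have e1 := cnt_succ B m
    have e2 := cnt_succ C m
    rw [if_pos hbB] at e1
    rw [if_neg hbC] at e2
    obtain ⟨c, g1, g2, g3, g4⟩ := up B C (n + r - (m+1)) (m+1) (by omega)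
      (by rw [show m + 1 + (n + r - (m+1)) = n + r by omega]; omega)
    have hL := latticePath_exch n r B C (m+1) c hB hC hbB g2 g3
    refine ⟨c, Finset.mem_sdiff.2 ⟨g2, g3⟩, hL, ?_, ?_⟩
    · rw [pathAbove_iff_s10 r _ _ hα.2 hL.2]
      intro i
      have e := cnt_exch B (m+1) c hbB g3 i
      have := hB1 i
      split_ifs at e <;> omega
    · rw [pathAbove_iff_s10 r _ _ hL.2 hω.2]
      intro i
      have e := cnt_exch B (m+1) c hbB g3 i
      have := hB2 i
      have := hC2 i
      have := g4 i
      split_ifs at e <;> omega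
end
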